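/- arXiv:1609.00265 — 13 statements merged into one kernel-verified Lean document; each statement's English description precedes it below -/
import Mathlib

section
/- Extendability of k-monotonicity: let P be a finite partially ordered set, let k ≥ 1 be an integer, let X ⊆ P, and let f : P → {0,1} be a function such that there is no chain x₁ ⪯ x₂ ⪯ ⋯ ⪯ x_{k+1} with all xᵢ ∈ X, f(x₁) = 1, and f(xᵢ) ≠ f(xᵢ₊₁) for all 1 ≤ i ≤ k. Then there exists a function g : P → {0,1} with g(x) = f(x) for every x ∈ X and such that g is k-monotone on all of P. -/
/-!
For `p : P`, let `h p` be the largest number of points in a chain of points of `X` lying below `p`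
on which `f` alternates, starting with the value `1`. By hypothesis `h ≤ k`, and `h` is monotone.
Put `g p = 1` iff `h p` is odd. If `x ∈ X`, then `g x = f x`: otherwise `x` itself could be
appended to a longest chain below `x` (`exists_chain_of_altBelow` turns the resulting long chain
into a forbidden one when `h x = k`). Along a violating chain for `g`, `h` starts at an odd value
and changes parity at each of the `k` steps, so by monotonicity it reaches at least `k + 1`, which
is impossible.
-/

/-- A violating chain for `(f, k)`: a monotone sequence `x₁ ⪯ … ⪯ x_{k+1}` with
`f(x₁) = 1` and alternating values along the chain. -/
def IsViolChain {α : Type*} [Preorder α] (f : α → Bool) (k : ℕ)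
    (x : Fin (k + 1) → α) : Prop :=
  Monotone x ∧ f (x 0) = true ∧ ∀ i : Fin k, f (x i.castSucc) ≠ f (x i.succ)

/-- `f` is `k`-monotone: there is no violating chain for `(f, k)`. -/
def KMonotone {α : Type*} [Preorder α] (f : α → Bool) (k : ℕ) : Prop :=
  ¬ ∃ x : Fin (k + 1) → α, IsViolChain f k x

/-- `AltBelow X f m p`: there is a chain of `m` points of `X`, all `⪯ p`, on which `f` takes the
values `1, 0, 1, …` in increasing order. The recursion peels off the top point. -/
def AltBelow {P : Type*} [PartialOrder P] (X : Set P) (f : P → Bool) : ℕ → P → Prop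
  | 0, _ => True
  | m + 1, p => ∃ y ∈ X, y ≤ p ∧ f y = decide (Even m) ∧ AltBelow X f m y

theorem AltBelow.mono {P : Type*} [PartialOrder P] {X : Set P} {f : P → Bool} {m : ℕ} {p q : P}
    (h : AltBelow X f m p) (hpq : p ≤ q) : AltBelow X f m q := by
  cases m with
  | zero => trivial
  | succ m =>
    obtain ⟨y, hy, hyp, h⟩ := h
    exact ⟨y, hy, hyp.trans hpq, h⟩

/-- The points of an alternating chain, listed as an eventually constant monotone sequence
indexed by `ℕ`. -/
theorem exists_chain_of_altBelow {P : Type*} [PartialOrder P] {X : Set P} {f : P → Bool} (m : ℕ) :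
    ∀ p : P, AltBelow X f (m + 1) p → ∃ x : ℕ → P, Monotone x ∧ (∀ n, x n ∈ X) ∧
      (∀ n ≤ m, f (x n) = decide (Even n)) ∧ ∀ n, x n ≤ p := by
  induction m with
  | zero =>
    rintro p ⟨y, hy, hyp, hf, -⟩
    refine ⟨fun _ => y, monotone_const, fun _ => hy, fun n hn => ?_, fun _ => hyp⟩
    obtain rfl : n = 0 := by omega
    exact hf
  | succ m ih =>
    rintro p ⟨y, hy, hyp, hf, h⟩
    obtain ⟨x, hmono, hX, hv, hle⟩ := ih y h
    refine ⟨fun n => if n ≤ m then x n else y, fun a b hab => ?_, fun n => ?_, fun n hn => ?_,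
      fun n => ?_⟩
    · dsimp only
      split_ifs with h1 h2 h2
      · exact hmono hab
      · exact hle a
      · omega
      · exact le_rfl
    · dsimp only
      split_ifs
      exacts [hX n, hy]
    · dsimp only
      split_ifs with h1
      · exact hv n h1
      · obtain rfl : n = m + 1 := by omega
        exact hf
    · dsimp only
      split_ifs
      exacts [(hle n).trans hyp, hyp]

/-- Extendability of `k`-monotonicity. -/
theorem extendability_of_kMonotone {P : Type*} [PartialOrder P] [Fintype P]
    (k : ℕ) (hk : 1 ≤ k) (X : Set P) (f : P → Bool)
    (hf : ¬ ∃ x : Fin (k + 1) → P, (∀ i, x i ∈ X) ∧ IsViolChain f k x) :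
    ∃ g : P → Bool, (∀ x ∈ X, g x = f x) ∧ KMonotone g k := by
  classical
  have hno : ∀ p, ¬ AltBelow X f (k + 1) p := by
    intro p hp
    obtain ⟨x, hmono, hX, hv, -⟩ := exists_chain_of_altBelow k p hp
    refine hf ⟨fun i => x i, fun i => hX i, fun i j hij => hmono hij, ?_, fun i => ?_⟩
    · simpa using hv 0 (Nat.zero_le k)
    · have h1 := hv i (by omega)
      have h2 := hv (i + 1) (by omega)
      simp only [Fin.val_castSucc, Fin.val_succ, h1, h2, ne_eq, decide_eq_decide, Nat.even_add_one]
      tauto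
  let h : P → ℕ := fun p => Nat.findGreatest (fun m => AltBelow X f m p) k
  have hspec : ∀ p, AltBelow X f (h p) p := fun p =>
    Nat.findGreatest_spec (P := fun m => AltBelow X f m p) (Nat.zero_le k) trivial
  have hle : ∀ p, h p ≤ k := fun p => Nat.findGreatest_le k
  have hmax : ∀ p m, m ≤ k → AltBelow X f m p → m ≤ h p := fun p m hm hp =>
    Nat.le_findGreatest hm hp
  have hmono : Monotone h := fun p q hpq => hmax q _ (hle p) ((hspec p).mono hpq)
  refine ⟨fun p => decide (Odd (h p)), fun x hx => ?_, ?_⟩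
  · have hne : f x ≠ decide (Even (h x)) := by
      intro heq
      have hC : AltBelow X f (h x + 1) x := ⟨x, hx, le_rfl, heq, hspec x⟩
      rcases (hle x).eq_or_lt with hk' | hlt
      · exact hno x (hk' ▸ hC)
      · have := hmax x _ hlt hC
        omega
    by_cases he : Even (h x) <;> simp_all
  · rintro ⟨x, hx, h0, halt⟩
    have key : ∀ n (hn : n < k + 1), n + 1 ≤ h (x ⟨n, hn⟩) := by
      intro n
      induction n with
      | zero =>
        intro hn
        have : Odd (h (x 0)) := by simpa using h0
        exact this.pos
      | succ n ih =>
        intro hn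
        have h1 := ih (by omega)
        have h2 : h (x ⟨n, by omega⟩) ≤ h (x ⟨n + 1, hn⟩) :=
          hmono (hx (Fin.mk_le_mk.2 (Nat.le_succ n)))
        have h3 : h (x ⟨n, by omega⟩) ≠ h (x ⟨n + 1, hn⟩) := fun heq =>
          halt ⟨n, by omega⟩ (congrArg (fun m => decide (Odd m)) heq)
        omega
    have h1 := key k (by omega)
    have h2 := hle (x ⟨k, by omega⟩)
    omega
end

section
/- Distance to k-monotonicity equals the minimum vertex cover of the violation hypergraph: let P be a finite partially ordered set, k ≥ 1 an integer, and f : P → {0,1}. Then the minimum, over all k-monotone functions g : P → {0,1}, of the number of points x ∈ P with f(x) ≠ g(x), is equal to the minimum cardinality of a set C ⊆ P such that every violating chain for (f,k) contains at least one point of C. -/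
/-- There is a chain of `m` points below `x`, all outside `C`, on which `f` takes the values
`1, 0, 1, …`. The chain is encoded as a monotone sequence on `ℕ` of which only the first `m` terms
are constrained to alternate. -/
def HasAltChain {P : Type*} [Preorder P] (f : P → Bool) (C : Finset P) (m : ℕ) (x : P) : Prop :=
  ∃ c : ℕ → P, Monotone c ∧ (∀ i, c i ≤ x) ∧ ∀ i < m, c i ∉ C ∧ f (c i) = decide (Even i)

lemma HasAltChain.zero {P : Type*} [Preorder P] (f : P → Bool) (C : Finset P) (x : P) :
    HasAltChain f C 0 x :=
  ⟨fun _ => x, monotone_const, fun _ => le_rfl, fun i hi => absurd hi (Nat.not_lt_zero i)⟩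

lemma HasAltChain.mono {P : Type*} [Preorder P] {f : P → Bool} {C : Finset P} {m : ℕ} {x y : P}
    (h : HasAltChain f C m x) (hxy : x ≤ y) : HasAltChain f C m y := by
  obtain ⟨c, hc, hcx, hf⟩ := h
  exact ⟨c, hc, fun i => (hcx i).trans hxy, hf⟩

lemma HasAltChain.succ {P : Type*} [Preorder P] {f : P → Bool} {C : Finset P} {m : ℕ} {x : P}
    (h : HasAltChain f C m x) (hx : x ∉ C) (hfx : f x = decide (Even m)) :
    HasAltChain f C (m + 1) x := by
  obtain ⟨c, hc, hcx, hf⟩ := h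
  refine ⟨fun i => if i < m then c i else x, fun i j hij => ?_, fun i => ?_, fun i hi => ?_⟩
  · by_cases hj : j < m
    · simpa [hj, lt_of_le_of_lt hij hj] using hc hij
    · by_cases hi : i < m <;> simp [hi, hj, hcx i]
  · by_cases hi : i < m <;> simp [hi, hcx i]
  · by_cases him : i < m
    · simpa [him] using hf i him
    · obtain rfl : i = m := by omega
      simpa using ⟨hx, hfx⟩

lemma not_hasAltChain_of_cover {P : Type*} [Preorder P] {f : P → Bool} {C : Finset P} {k : ℕ}
    (hC : ∀ x : Fin (k + 1) → P, IsViolChain f k x → ∃ i, x i ∈ C) (x : P) :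
    ¬ HasAltChain f C (k + 1) x := by
  rintro ⟨c, hc, -, hf⟩
  obtain ⟨i, hi⟩ := hC (fun i => c i) ⟨fun i j hij => hc hij, by simpa using (hf 0 (by omega)).2,
    fun i => by
      have h1 := (hf i (by omega)).2
      have h2 := (hf (i + 1) (by omega)).2
      simp only [Fin.val_castSucc, Fin.val_succ, h1, h2, Nat.even_add_one]
      by_cases h : Even (i : ℕ) <;> simp [h]⟩
  exact (hf i i.2).1 hi

open Classical in
/-- The largest length, capped at `k`, of an alternating chain below `x` that avoids `C`. The cap
is never active when `C` is a cover. -/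
noncomputable def altLength {P : Type*} [Preorder P] (f : P → Bool) (C : Finset P) (k : ℕ)
    (x : P) : ℕ :=
  Nat.findGreatest (fun m => HasAltChain f C m x) k

lemma altLength_le {P : Type*} [Preorder P] (f : P → Bool) (C : Finset P) (k : ℕ) (x : P) :
    altLength f C k x ≤ k := by
  classical
  exact Nat.findGreatest_le k

lemma hasAltChain_altLength {P : Type*} [Preorder P] (f : P → Bool) (C : Finset P) (k : ℕ)
    (x : P) : HasAltChain f C (altLength f C k x) x := by
  classical
  exact Nat.findGreatest_spec (P := fun m => HasAltChain f C m x) (Nat.zero_le k)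
    (HasAltChain.zero f C x)

lemma HasAltChain.le_altLength {P : Type*} [Preorder P] {f : P → Bool} {C : Finset P} {k m : ℕ}
    {x : P} (h : HasAltChain f C m x) (hm : m ≤ k) : m ≤ altLength f C k x := by
  classical
  exact Nat.le_findGreatest hm h

lemma altLength_mono {P : Type*} [Preorder P] (f : P → Bool) (C : Finset P) (k : ℕ) :
    Monotone (altLength f C k) := fun x _ hxy =>
  ((hasAltChain_altLength f C k x).mono hxy).le_altLength (altLength_le f C k x)

/-- The parity of `altLength`. When `C` is a cover, this extends the restriction of `f` to the
complement of `C`. -/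
noncomputable def coverExtension {P : Type*} [Preorder P] (f : P → Bool) (C : Finset P) (k : ℕ)
    (x : P) : Bool :=
  decide (Odd (altLength f C k x))

/-- `k`-monotonicity holds for an arbitrary `C`, since `altLength` is capped at `k`. -/
lemma kMonotone_coverExtension {P : Type*} [Preorder P] (f : P → Bool) (C : Finset P) (k : ℕ) :
    KMonotone (coverExtension f C k) k := by
  rintro ⟨x, hx, h0, halt⟩
  have key : ∀ i : Fin (k + 1), (i : ℕ) + 1 ≤ altLength f C k (x i) := by
    intro i
    induction i using Fin.induction with
    | zero =>
      have : Odd (altLength f C k (x 0)) := by simpa [coverExtension] using h0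
      simpa [Nat.one_le_iff_ne_zero, Nat.pos_iff_ne_zero] using this.pos
    | succ i ih =>
      have hle := altLength_mono f C k (hx (Fin.castSucc_le_succ i))
      have hne : altLength f C k (x i.castSucc) ≠ altLength f C k (x i.succ) := fun h =>
        halt i (by simp only [coverExtension, h])
      simp only [Fin.val_castSucc, Fin.val_succ] at ih ⊢
      omega
  have h1 := key (Fin.last k)
  have h2 := altLength_le f C k (x (Fin.last k))
  simp only [Fin.val_last] at h1
  omega

lemma coverExtension_eq {P : Type*} [Preorder P] {f : P → Bool} {C : Finset P} {k : ℕ}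
    (hC : ∀ x : Fin (k + 1) → P, IsViolChain f k x → ∃ i, x i ∈ C) {x : P} (hx : x ∉ C) :
    f x = coverExtension f C k x := by
  have hne : f x ≠ decide (Even (altLength f C k x)) := by
    intro h
    have hs := (hasAltChain_altLength f C k x).succ hx h
    rcases (altLength_le f C k x).lt_or_eq with hlt | heq
    · have := hs.le_altLength (k := k) hlt
      omega
    · rw [heq] at hs
      exact not_hasAltChain_of_cover hC x hs
  unfold coverExtension
  by_cases h : Even (altLength f C k x)
  · have h' := Nat.not_odd_iff_even.mpr h
    simpa [h, h'] using hne
  · have h' := Nat.not_even_iff_odd.mp h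
    simpa [h, h'] using hne

/-- The distance of `f` to `k`-monotonicity equals the minimum size of a vertex
cover of the violation hypergraph of `f`. -/
theorem dist_kMonotone_eq_min_vertex_cover {P : Type*} [PartialOrder P] [Fintype P]
    (k : ℕ) (hk : 1 ≤ k) (f : P → Bool) :
    sInf {c : ℕ | ∃ g : P → Bool, KMonotone g k ∧
        c = (Finset.univ.filter (fun x => f x ≠ g x)).card} =
    sInf {c : ℕ | ∃ C : Finset P,
        (∀ x : Fin (k + 1) → P, IsViolChain f k x → ∃ i, x i ∈ C) ∧ c = C.card} := by
  have toG : ∀ C : Finset P, (∀ x : Fin (k + 1) → P, IsViolChain f k x → ∃ i, x i ∈ C) →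
      (Finset.univ.filter (fun x => f x ≠ coverExtension f C k x)).card ≤ C.card := by
    intro C hC
    refine Finset.card_le_card fun x hx => ?_
    by_contra hxC
    exact (Finset.mem_filter.mp hx).2 (coverExtension_eq hC hxC)
  apply le_antisymm
  · refine le_csInf ⟨_, Finset.univ, fun x _ => ⟨0, Finset.mem_univ _⟩, rfl⟩ ?_
    rintro _ ⟨C, hC, rfl⟩
    refine le_trans (Nat.sInf_le ?_) (toG C hC)
    exact ⟨_, kMonotone_coverExtension f C k, rfl⟩
  · refine le_csInf ⟨_, _, kMonotone_coverExtension f ∅ k, rfl⟩ ?_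
    rintro _ ⟨g, hg, rfl⟩
    refine Nat.sInf_le ⟨_, fun x hx => ?_, rfl⟩
    by_contra! hcon
    have heq : ∀ i, f (x i) = g (x i) := fun i => by simpa using hcon i
    obtain ⟨hm, h0, halt⟩ := hx
    exact hg ⟨x, hm, heq 0 ▸ h0, fun i => by simpa only [heq] using halt i⟩
end

section
/- Let k ≥ 1 and d ≥ 1 be integers, let h : {0,1}^d → {0,1} be a (k−1)-monotone function and let g : {0,1}^d → {0,1} be a monotone function. Then the function g||h : {0,1}^d × {0,1}^d → {0,1} defined by (g||h)(x,y) = g(x) XOR h(y) is k-monotone, where {0,1}^d × {0,1}^d carries the product (coordinatewise) partial order. -/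
/-- A sequence violates `k`-monotonicity iff it is a chain whose values are `1, 0, 1, 0, …`. -/
theorem isViolChain_iff {α : Type*} [Preorder α] (f : α → Bool) (k : ℕ) (x : Fin (k + 1) → α) :
    IsViolChain f k x ↔ Monotone x ∧ ∀ i, f (x i) = decide (Even (i : ℕ)) := by
  constructor
  · rintro ⟨hx, h0, halt⟩
    refine ⟨hx, fun i => ?_⟩
    induction i using Fin.induction with
    | zero => simpa using h0
    | succ i ih =>
      have := halt i
      rw [ih] at this
      rw [Bool.eq_not_of_ne this.symm]
      by_cases h : Even (i : ℕ) <;> simp [Nat.even_add_one, h]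
  · rintro ⟨hx, hval⟩
    refine ⟨hx, by simp [hval], fun i => ?_⟩
    rw [hval, hval]
    by_cases h : Even (i : ℕ) <;> simp [Nat.even_add_one, h]

/-- A monotone Boolean sequence is a block of zeros followed by a block of ones; `q` marks the
boundary, and nothing is claimed about the value at `q` itself. -/
theorem exists_threshold {n : ℕ} (u : Fin (n + 1) → Bool) (hu : Monotone u) :
    ∃ q, (∀ i < q, u i = false) ∧ ∀ i, q < i → u i = true := by
  by_cases hex : ∃ i, u i = true
  · obtain ⟨q, hq, hmin⟩ := WellFounded.has_min (wellFounded_lt (α := Fin (n + 1)))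
      {i | u i = true} hex
    refine ⟨q, fun i hi => ?_, fun i hi => ?_⟩
    · by_contra hne
      exact hmin i (by simpa using hne) hi
    · exact Bool.le_iff_imp.mp (hu hi.le) hq
  · push Not at hex
    exact ⟨Fin.last n, fun i _ => by simpa using hex i,
      fun i hi => absurd hi (Fin.le_last i).not_gt⟩

/-- If `h` is `(k-1)`-monotone and `g` is monotone on the hypercube `{0,1}^d`, then
`(g‖h)(x,y) = g(x) ⊕ h(y)` is `k`-monotone on the product `{0,1}^d × {0,1}^d`. -/
theorem kMonotone_xor_of_monotone (k d : ℕ) (hk : 1 ≤ k) (hd : 1 ≤ d)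
    (h : (Fin d → Bool) → Bool) (g : (Fin d → Bool) → Bool)
    (hh : KMonotone h (k - 1)) (hg : Monotone g) :
    KMonotone (fun p : (Fin d → Bool) × (Fin d → Bool) => xor (g p.1) (h p.2)) k := by
  obtain ⟨m, rfl⟩ : ∃ m, k = m + 1 := ⟨k - 1, by omega⟩
  rintro ⟨p, hp⟩
  obtain ⟨hmono, hval⟩ := (isViolChain_iff _ _ _).mp hp
  obtain ⟨q, hlow, hhigh⟩ := exists_threshold (fun i => g (p i).1)
    (fun i j hij => hg (hmono hij).1)
  refine hh ⟨fun i : Fin (m + 1) => (p (q.succAbove i)).2,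
    (isViolChain_iff h m _).mpr ⟨fun i j hij => ?_, fun i => ?_⟩⟩
  · exact (hmono ((Fin.strictMono_succAbove q).monotone hij)).2
  · rcases lt_or_ge i.castSucc q with hi | hi
    · have h1 := hval i.castSucc
      have h2 := hlow _ hi
      simpa [Fin.succAbove_of_castSucc_lt q i hi, h2] using h1
    · have h1 := hval i.succ
      have h2 := hhigh i.succ (lt_of_le_of_lt hi i.castSucc_lt_succ)
      by_cases he : Even (i : ℕ) <;>
        simpa [Fin.succAbove_of_le_castSucc q i hi, h2, Nat.even_add_one, he] using h1
end

section
/- Let k ≥ 1, d ≥ 1, M ≥ 0 be integers and ε > 0 a real. Suppose h : {0,1}^d → {0,1} admits M chains y₁ ⪯ y₂ ⪯ ⋯ ⪯ y_k in {0,1}^d with pairwise disjoint vertex sets such that h(y₁) = 0 and h(yᵢ) ≠ h(yᵢ₊₁) for all 1 ≤ i ≤ k−1, and suppose g : {0,1}^d → {0,1} is such that every monotone function differs from g on at least ε·2^d points. Then every k-monotone function F : {0,1}^d × {0,1}^d → {0,1} (product order) differs from the function (g||h)(x,y) = g(x) XOR h(y) on at least M·ε·2^{d−1} points. -/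
/-- A vertex cover `B` of the violation graph of `g` suffices to repair `g`: the upward closure of
`{z ∉ B | g z = 1}` is monotone and agrees with `g` off `B`. -/
theorem exists_monotone_of_cover {α : Type*} [Preorder α] (g : α → Bool) (B : Set α)
    (hB : ∀ x x', x ≤ x' → g x = true → g x' = false → x ∈ B ∨ x' ∈ B) :
    ∃ g' : α → Bool, Monotone g' ∧ ∀ x, g x ≠ g' x → x ∈ B := by
  classical
  refine ⟨fun x => decide (∃ z, z ≤ x ∧ z ∉ B ∧ g z = true), ?_, ?_⟩
  · intro a b hab
    rw [Bool.le_iff_imp]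
    simp only [decide_eq_true_eq]
    rintro ⟨z, hz, hz'⟩
    exact ⟨z, hz.trans hab, hz'⟩
  · intro x hx
    by_contra hxB
    apply hx
    rw [Bool.eq_iff_iff, decide_eq_true_eq]
    refine ⟨fun hg => ⟨x, le_rfl, hxB, hg⟩, ?_⟩
    rintro ⟨z, hzx, hzB, hgz⟩
    by_contra hg
    rcases hB z x hzx hgz (by simpa using hg) with h1 | h1
    exacts [hzB h1, hxB h1]

/-- A `k`-monotone `F` differs from `g‖h` over one endpoint of every pair violating the monotonicity
of `g`, somewhere along any alternating chain `c` for `h` (of length `k = n + 1`). -/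
theorem mem_of_violation {α β : Type*} [Preorder α] [Preorder β] {n : ℕ}
    {F : α × β → Bool} (hF : KMonotone F (n + 1)) (g : α → Bool) (h : β → Bool)
    (c : Fin (n + 1) → β) (hc : Monotone c) (h0 : h (c 0) = false)
    (halt : ∀ i : Fin n, h (c i.castSucc) ≠ h (c i.succ))
    {x x' : α} (hx : x ≤ x') (hgx : g x = true) (hgx' : g x' = false) :
    (∃ i, F (x, c i) ≠ xor (g x) (h (c i))) ∨ ∃ i, F (x', c i) ≠ xor (g x') (h (c i)) := by
  by_contra hcon
  push Not at hcon
  obtain ⟨hFx, hFx'⟩ := hcon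
  simp only [hgx, hgx', Bool.true_xor, Bool.false_xor] at hFx hFx'
  refine hF ⟨Fin.snoc (α := fun _ => α × β) (fun i => (x, c i)) (x', c (Fin.last n)), ?_, ?_, ?_⟩
  · rw [Fin.monotone_iff_le_succ]
    intro i
    induction i using Fin.lastCases with
    | last =>
      rw [Fin.succ_last, Fin.snoc_last, Fin.snoc_castSucc]
      exact ⟨hx, le_rfl⟩
    | cast j =>
      rw [Fin.succ_castSucc, Fin.snoc_castSucc, Fin.snoc_castSucc]
      exact ⟨le_rfl, hc (Fin.castSucc_lt_succ).le⟩
  · rw [← Fin.castSucc_zero, Fin.snoc_castSucc, hFx, h0]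
    rfl
  · intro i
    induction i using Fin.lastCases with
    | last =>
      rw [Fin.succ_last, Fin.snoc_last, Fin.snoc_castSucc, hFx, hFx']
      simp
    | cast j =>
      rw [Fin.succ_castSucc, Fin.snoc_castSucc, Fin.snoc_castSucc, hFx, hFx]
      simpa using halt j

/-- If `h` admits `M` vertex-disjoint alternating chains of length `k` starting at value `0`,
and `g` is `ε`-far from monotone, then `g‖h` is far from every `k`-monotone function. -/
theorem far_from_kMonotone_of_matching (k d M : ℕ) (hk : 1 ≤ k) (hd : 1 ≤ d)
    (ε : ℝ) (hε : 0 < ε)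
    (h : (Fin d → Bool) → Bool) (g : (Fin d → Bool) → Bool)
    (T : Finset (Fin k → (Fin d → Bool)))
    (hTcard : T.card = M)
    (hTchain : ∀ c ∈ T, Monotone c)
    (hTstart : ∀ c ∈ T, h (c ⟨0, hk⟩) = false)
    (hTalt : ∀ c ∈ T, ∀ i : ℕ, (hi : i + 1 < k) →
        h (c ⟨i, Nat.lt_of_succ_lt hi⟩) ≠ h (c ⟨i + 1, hi⟩))
    (hTdisj : ∀ c ∈ T, ∀ c' ∈ T, c ≠ c' → Disjoint (Set.range c) (Set.range c'))
    (hgfar : ∀ g' : (Fin d → Bool) → Bool, Monotone g' →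
        (ε * 2 ^ d : ℝ) ≤ (Finset.univ.filter (fun x => g x ≠ g' x)).card)
    (F : ((Fin d → Bool) × (Fin d → Bool)) → Bool) (hF : KMonotone F k) :
    (M * ε * 2 ^ (d - 1) : ℝ) ≤
      (Finset.univ.filter (fun p : (Fin d → Bool) × (Fin d → Bool) =>
        F p ≠ xor (g p.1) (h p.2))).card := by
  classical
  obtain ⟨n, rfl⟩ : ∃ n, k = n + 1 := ⟨k - 1, by omega⟩
  set bad := Finset.univ.filter (fun p : (Fin d → Bool) × (Fin d → Bool) =>
    F p ≠ xor (g p.1) (h p.2)) with hbad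
  -- The differences lying over the chain `c`; their first coordinates form the vertex cover.
  let S : (Fin (n + 1) → (Fin d → Bool)) → Finset ((Fin d → Bool) × (Fin d → Bool)) :=
    fun c => bad.filter (fun p => p.2 ∈ Set.range c)
  have hS : ∀ c ∈ T, (ε * 2 ^ d : ℝ) ≤ (S c).card := by
    intro c hc
    have hmem : ∀ x, (∃ i, F (x, c i) ≠ xor (g x) (h (c i))) → x ∈ (S c).image Prod.fst := by
      rintro x ⟨i, hi⟩
      exact Finset.mem_image.2 ⟨(x, c i), by simpa [S, hbad] using hi, rfl⟩
    obtain ⟨g', hg', hdiff⟩ := exists_monotone_of_cover g ((S c).image Prod.fst : Finset _)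
      (fun x x' hx hgx hgx' =>
        (mem_of_violation hF g h c (hTchain c hc) (hTstart c hc)
          (fun i => hTalt c hc i (by omega)) hx hgx hgx').imp (hmem x) (hmem x'))
    refine (hgfar g' hg').trans ?_
    have hsub : Finset.univ.filter (fun x => g x ≠ g' x) ⊆ (S c).image Prod.fst := by
      intro x hx
      exact hdiff x (Finset.mem_filter.1 hx).2
    exact_mod_cast (Finset.card_le_card hsub).trans Finset.card_image_le
  have hdisj : (T : Set (Fin (n + 1) → (Fin d → Bool))).PairwiseDisjoint S := by
    intro c hc c' hc' hne
    refine Finset.disjoint_left.2 fun p hp hp' => ?_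
    exact Set.disjoint_left.1 (hTdisj c hc c' hc' hne)
      (Finset.mem_filter.1 hp).2 (Finset.mem_filter.1 hp').2
  have hsum : ∑ c ∈ T, (S c).card ≤ bad.card := by
    rw [← Finset.card_biUnion hdisj]
    exact Finset.card_le_card (Finset.biUnion_subset.2 fun c _ => Finset.filter_subset _ _)
  calc (M * ε * 2 ^ (d - 1) : ℝ) ≤ M * ε * 2 ^ d := by
        gcongr
        · norm_num
        · omega
    _ = ∑ _c ∈ T, (ε * 2 ^ d : ℝ) := by
        rw [Finset.sum_const, hTcard, nsmul_eq_mul, mul_assoc]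
    _ ≤ ∑ c ∈ T, ((S c).card : ℝ) := Finset.sum_le_sum hS
    _ ≤ bad.card := by exact_mod_cast hsum
end

section
/- For every integer k ≥ 1 and every real δ > 0, there exists D such that for every d ≥ D there is a (k−1)-monotone function h : {0,1}^d → {0,1} together with at least (1−δ)·2^d/k chains y₁ ⪯ y₂ ⪯ ⋯ ⪯ y_k in {0,1}^d with pairwise disjoint vertex sets, satisfying h(y₁) = 0 and h(yᵢ) ≠ h(yᵢ₊₁) for all 1 ≤ i ≤ k−1. -/
open Finset

/-! ### Layers of the cube are small -/

/-- The bound `centralBinom n = O(4 ^ n / √n)`, squared to stay within the natural numbers. -/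
lemma centralBinom_sq_mul_le (n : ℕ) : n.centralBinom ^ 2 * (2 * n + 1) ≤ 16 ^ n := by
  induction n with
  | zero => simp
  | succ n ih =>
    have h := Nat.succ_mul_centralBinom_succ n
    have hpos : 0 < (n + 1) ^ 2 := by positivity
    refine Nat.le_of_mul_le_mul_left ?_ hpos
    calc (n + 1) ^ 2 * ((n + 1).centralBinom ^ 2 * (2 * (n + 1) + 1))
        = ((n + 1) * (n + 1).centralBinom) ^ 2 * (2 * n + 3) := by ring
      _ = 4 * (2 * n + 1) * (2 * n + 3) * (n.centralBinom ^ 2 * (2 * n + 1)) := by rw [h]; ring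
      _ ≤ 4 * (2 * n + 1) * (2 * n + 3) * 16 ^ n := Nat.mul_le_mul_left _ ih
      _ ≤ (16 * (n + 1) ^ 2) * 16 ^ n := Nat.mul_le_mul_right _ (by nlinarith)
      _ = (n + 1) ^ 2 * 16 ^ (n + 1) := by ring

lemma choose_le_two_mul_centralBinom (d j : ℕ) :
    d.choose j ≤ 2 ^ (d % 2) * (d / 2).centralBinom := by
  rcases Nat.mod_two_eq_zero_or_one d with h | h
  · have hd : d = 2 * (d / 2) := by omega
    rw [h, pow_zero, one_mul]
    conv_lhs => rw [hd]
    exact Nat.choose_le_centralBinom _ _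
  · have hd : d = 2 * (d / 2) + 1 := by omega
    rw [h, pow_one]
    conv_lhs => rw [hd]
    cases j with
    | zero =>
      have := Nat.centralBinom_pos (d / 2)
      simp only [Nat.choose_zero_right]
      omega
    | succ j =>
      rw [Nat.choose_succ_succ]
      have h1 := Nat.choose_le_centralBinom j (d / 2)
      have h2 := Nat.choose_le_centralBinom (j + 1) (d / 2)
      simp only [Nat.succ_eq_add_one]
      omega

/-- Every layer of the `d`-cube has size `o(2 ^ d)`, uniformly in the layer. -/
lemma exists_choose_le (ε : ℝ) (hε : 0 < ε) :
    ∃ D : ℕ, ∀ d, D ≤ d → ∀ j, (d.choose j : ℝ) ≤ ε * 2 ^ d := by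
  obtain ⟨N, hN⟩ := exists_nat_gt (1 / ε ^ 2)
  refine ⟨2 * N, fun d hd j => ?_⟩
  set n := d / 2 with hn
  have hcb : (n.centralBinom : ℝ) ≤ ε * 4 ^ n := by
    have h1 : ((n.centralBinom : ℝ)) ^ 2 * (2 * n + 1) ≤ 16 ^ n := by
      exact_mod_cast centralBinom_sq_mul_le n
    have hNn : (N : ℝ) ≤ n := by exact_mod_cast (by omega : N ≤ n)
    have h2 : 1 ≤ ε ^ 2 * (2 * n + 1) := by
      rw [div_lt_iff₀ (by positivity)] at hN
      have : (N : ℝ) * ε ^ 2 ≤ n * ε ^ 2 := by gcongr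
      nlinarith [sq_nonneg ε, (Nat.cast_nonneg n : (0 : ℝ) ≤ n)]
    refine (sq_le_sq₀ (by positivity) (by positivity)).mp ?_
    have h3 : (ε * 4 ^ n) ^ 2 = ε ^ 2 * 16 ^ n := by
      rw [mul_pow, ← pow_mul, mul_comm n 2, pow_mul]; norm_num
    rw [h3]
    calc (n.centralBinom : ℝ) ^ 2
        ≤ (n.centralBinom : ℝ) ^ 2 * (ε ^ 2 * (2 * n + 1)) :=
          le_mul_of_one_le_right (by positivity) h2
      _ = ε ^ 2 * ((n.centralBinom : ℝ) ^ 2 * (2 * n + 1)) := by ring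
      _ ≤ ε ^ 2 * 16 ^ n := by gcongr
  calc (d.choose j : ℝ) ≤ 2 ^ (d % 2) * n.centralBinom := by
        exact_mod_cast choose_le_two_mul_centralBinom d j
    _ ≤ 2 ^ (d % 2) * (ε * 4 ^ n) := by gcongr
    _ = ε * 2 ^ d := by
        have : (2 : ℝ) ^ d = 2 ^ (d % 2) * 4 ^ n := by
          conv_lhs => rw [← Nat.mod_add_div d 2]
          rw [pow_add, pow_mul, ← hn]; norm_num
        rw [this]; ring

/-! ### Choice of the thresholds -/

/-- Cumulative layer sizes grow in steps of at most `M`, so they hit every window of length `M`. -/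
lemma exists_cumulative (d : ℕ) (M : ℝ) (hM : ∀ j, (d.choose j : ℝ) ≤ M)
    (x : ℝ) (hx0 : 0 ≤ x) (hx : x ≤ 2 ^ d) :
    ∃ t : ℕ, x ≤ ∑ j ∈ range t, (d.choose j : ℝ) ∧
      ∑ j ∈ range t, (d.choose j : ℝ) ≤ x + M := by
  classical
  have hex : ∃ t : ℕ, x ≤ ∑ j ∈ range t, (d.choose j : ℝ) := by
    refine ⟨d + 1, hx.trans (le_of_eq ?_)⟩
    exact_mod_cast (Nat.sum_range_choose d).symm
  refine ⟨Nat.find hex, Nat.find_spec hex, ?_⟩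
  rcases h : Nat.find hex with _ | t
  · have : (0 : ℝ) ≤ M := le_trans (Nat.cast_nonneg _) (hM 0)
    simp only [range_zero, sum_empty]
    linarith
  · have := Nat.find_min hex (m := t) (by omega)
    rw [sum_range_succ]
    linarith [hM t]

/-- Thresholds whose blocks decrease in size but whose last block still fills nearly a `1/k`
fraction of the cube. The number of vertices of weight below `t i` is within `M` above
`i * 2 ^ d / k - M * i ^ 2`. -/
lemma exists_thresholds (k : ℕ) (hk : 1 ≤ k) (d : ℕ) (M : ℝ)
    (hM : ∀ j, (d.choose j : ℝ) ≤ M) (hM2 : 2 * k ^ 2 * M < 2 ^ d) :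
    ∃ t : ℕ → ℕ, (∀ i < k, t i < t (i + 1)) ∧
      (∀ i, i + 1 < k → ∑ j ∈ Ico (t (i + 1)) (t (i + 2)), d.choose j ≤
        ∑ j ∈ Ico (t i) (t (i + 1)), d.choose j) ∧
      (2 ^ d / k - 2 * k * M : ℝ) ≤ (∑ j ∈ Ico (t (k - 1)) (t k), d.choose j : ℕ) := by
  have hk0 : (1 : ℝ) ≤ k := by exact_mod_cast hk
  have hM0 : (0 : ℝ) ≤ M := le_trans (Nat.cast_nonneg _) (hM 0)
  set s : ℝ := 2 ^ d / k with hs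
  have hsk : s * k = 2 ^ d := by rw [hs]; field_simp
  have hsM : 2 * k * M < s := by
    rw [hs, lt_div_iff₀ (by linarith)]; linarith
  have key : ∀ i : ℕ, ∃ t : ℕ, i ≤ k → (i * s - M * i ^ 2 ≤ ∑ j ∈ range t, (d.choose j : ℝ) ∧
      ∑ j ∈ range t, (d.choose j : ℝ) ≤ i * s - M * i ^ 2 + M) := by
    intro i
    by_cases hi : i ≤ k
    · have hi' : (i : ℝ) ≤ k := by exact_mod_cast hi
      have hi0 : (0 : ℝ) ≤ i := Nat.cast_nonneg i
      have h1 : (0 : ℝ) ≤ i * s - M * i ^ 2 := by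
        have : M * i ≤ s := by nlinarith
        nlinarith
      have h2 : i * s - M * i ^ 2 ≤ (2 : ℝ) ^ d := by
        have : 0 ≤ M * (i : ℝ) ^ 2 := by positivity
        have hs0 : 0 ≤ s := by positivity
        nlinarith
      obtain ⟨t, ht⟩ := exists_cumulative d M hM _ h1 h2
      exact ⟨t, fun _ => ht⟩
    · exact ⟨0, fun h => absurd h hi⟩
  choose t ht using key
  have hmono : ∀ i < k, t i < t (i + 1) := by
    intro i hi
    by_contra hcon
    have h1 : ∑ j ∈ range (t (i + 1)), (d.choose j : ℝ) ≤ ∑ j ∈ range (t i), (d.choose j : ℝ) :=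
      sum_le_sum_of_subset_of_nonneg (range_mono (not_lt.mp hcon)) (fun _ _ _ => Nat.cast_nonneg _)
    have h2 := (ht i (by omega)).2
    have h3 := (ht (i + 1) (by omega)).1
    have hi' : (i : ℝ) + 1 ≤ k := by exact_mod_cast hi
    push_cast at h3
    nlinarith
  have hsum : ∀ i < k, ((∑ j ∈ Ico (t i) (t (i + 1)), d.choose j : ℕ) : ℝ) =
      ∑ j ∈ range (t (i + 1)), (d.choose j : ℝ) - ∑ j ∈ range (t i), (d.choose j : ℝ) := by
    intro i hi
    rw [← sum_Ico_eq_sub _ (hmono i hi).le]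
    push_cast
    rfl
  refine ⟨t, hmono, fun i hi => ?_, ?_⟩
  · have h1 := hsum i (by omega)
    have h2 := hsum (i + 1) hi
    have a0 := ht i (by omega)
    have a1 := ht (i + 1) (by omega)
    have a2 := ht (i + 1 + 1) (by omega)
    push_cast at a0 a1 a2
    have : ((∑ j ∈ Ico (t (i + 1)) (t (i + 1 + 1)), d.choose j : ℕ) : ℝ) ≤
        (∑ j ∈ Ico (t i) (t (i + 1)), d.choose j : ℕ) := by
      rw [h1, h2]
      nlinarith [a0.2, a1.1, a1.2, a2.2]
    exact_mod_cast this
  · obtain ⟨m, rfl⟩ : ∃ m, k = m + 1 := ⟨k - 1, by omega⟩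
    have h1 := hsum m (by omega)
    have a0 := (ht m (by omega)).2
    have a1 := (ht (m + 1) le_rfl).1
    simp only [Nat.add_sub_cancel]
    rw [h1]
    push_cast at a0 a1 ⊢
    nlinarith

/-! ### Matchings between consecutive blocks -/

/-- The block of all sets with size in `[a, b)`. -/
def block (d a b : ℕ) : Finset (Finset (Fin d)) := {A | a ≤ #A ∧ #A < b}

lemma mem_block {d a b : ℕ} {A : Finset (Fin d)} : A ∈ block d a b ↔ a ≤ #A ∧ #A < b := by
  simp [block]

lemma card_eq_sum_layers {d a b : ℕ} {S : Finset (Finset (Fin d))} (hS : S ⊆ block d a b) :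
    #S = ∑ r ∈ Ico a b, #{A ∈ S | #A = r} :=
  card_eq_sum_card_fiberwise fun A hA => by
    simpa [mem_block] using hS hA

lemma card_block (d a b : ℕ) : #(block d a b) = ∑ r ∈ Ico a b, d.choose r := by
  rw [card_eq_sum_layers (Subset.refl _)]
  refine sum_congr rfl fun r hr => ?_
  have : ({A ∈ block d a b | #A = r} : Finset (Finset (Fin d))) = powersetCard r univ := by
    ext A
    simp only [mem_filter, mem_block, mem_powersetCard_univ, mem_Ico] at hr ⊢
    omega
  rw [this, card_powersetCard, card_univ, Fintype.card_fin]

/-- Iterated local LYM inequality: the sets of size `s` below a family of sets of size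
`s + n` have at least the density of that family. -/
lemma density_le_below {d s n : ℕ} (𝒜 : Finset (Finset (Fin d)))
    (h𝒜 : ∀ A ∈ 𝒜, #A = s + n) :
    (#𝒜 : ℚ) / d.choose (s + n) ≤
      #({B | #B = s ∧ ∃ A ∈ 𝒜, B ⊆ A} : Finset (Finset (Fin d))) / d.choose s := by
  induction n generalizing 𝒜 with
  | zero =>
    refine div_le_div_of_nonneg_right ?_ (Nat.cast_nonneg _)
    exact_mod_cast card_le_card fun A hA => by
      simpa using ⟨h𝒜 A hA, A, hA, Subset.refl _⟩
  | succ n ih =>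
    have h1 := local_lubell_yamamoto_meshalkin_inequality_div (𝕜 := ℚ) (𝒜 := 𝒜)
      (r := s + (n + 1)) (by omega) (fun A hA => h𝒜 A hA)
    rw [Fintype.card_fin] at h1
    refine h1.trans ((ih (shadow 𝒜) ?_).trans ?_)
    · intro B hB
      obtain ⟨A, hA, a, ha, rfl⟩ := mem_shadow_iff.mp hB
      rw [card_erase_of_mem ha, h𝒜 A hA]; omega
    · refine div_le_div_of_nonneg_right ?_ (Nat.cast_nonneg _)
      refine Nat.cast_le.mpr (card_le_card fun B hB => ?_)
      simp only [mem_filter, mem_univ, true_and] at hB ⊢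
      obtain ⟨hB, A', hA', hBA⟩ := hB
      obtain ⟨A, hA, a, ha, rfl⟩ := mem_shadow_iff.mp hA'
      exact ⟨hB, A, hA, hBA.trans (erase_subset _ _)⟩

/-- Normalized matching between blocks: the density of a family in the upper block is at most
the density of the part of the lower block lying below it. -/
lemma card_mul_card_block_le {d a b c : ℕ} {S : Finset (Finset (Fin d))}
    (hS : S ⊆ block d b c) :
    #S * #(block d a b) ≤ #{B ∈ block d a b | ∃ A ∈ S, B ⊆ A} * #(block d b c) := by
  set N := ({B ∈ block d a b | ∃ A ∈ S, B ⊆ A} : Finset (Finset (Fin d))) with hN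
  rw [card_eq_sum_layers hS, card_eq_sum_layers (filter_subset _ _ : N ⊆ block d a b),
    card_block, card_block, sum_mul_sum, sum_mul_sum, sum_comm]
  refine sum_le_sum fun s hs => sum_le_sum fun r hr => ?_
  rw [mem_Ico] at hs hr
  obtain ⟨n, rfl⟩ : ∃ n, r = s + n := ⟨r - s, by omega⟩
  -- above the top layer the binomial coefficient vanishes, and so does the layer of `S`
  by_cases hd : d < s + n
  · have : #{A ∈ S | #A = s + n} = 0 := by
      rw [card_eq_zero, filter_eq_empty_iff]
      intro A _ h
      have := card_le_univ A
      rw [Fintype.card_fin] at this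
      omega
    rw [this, zero_mul]
    exact Nat.zero_le _
  have h1 := density_le_below (s := s) (n := n) ({A ∈ S | #A = s + n})
    (fun A hA => (mem_filter.mp hA).2)
  have p1 : (0 : ℚ) < d.choose (s + n) := by exact_mod_cast Nat.choose_pos (by omega)
  have p2 : (0 : ℚ) < d.choose s := by exact_mod_cast Nat.choose_pos (by omega)
  rw [div_le_div_iff₀ p1 p2] at h1
  have h2 : #{A ∈ S | #A = s + n} * d.choose s ≤
      #({B | #B = s ∧ ∃ A ∈ ({A ∈ S | #A = s + n} : Finset _), B ⊆ A} :
        Finset (Finset (Fin d))) * d.choose (s + n) := by exact_mod_cast h1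
  refine h2.trans (Nat.mul_le_mul_right _ (card_le_card fun B hB => ?_))
  simp only [mem_filter, mem_univ, true_and, mem_block] at hB ⊢
  obtain ⟨hB, A, ⟨hA, -⟩, hBA⟩ := hB
  exact ⟨⟨⟨by omega, by omega⟩, A, hA, hBA⟩, hB⟩

/-- If the upper block is not larger than the lower one, it can be matched into it. -/
lemma exists_matching {d a b c : ℕ} (hcard : #(block d b c) ≤ #(block d a b)) :
    ∃ f : Finset (Fin d) → Finset (Fin d), Set.InjOn f (block d b c) ∧
      ∀ A ∈ block d b c, f A ∈ block d a b ∧ f A ⊆ A := by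
  classical
  have hall := (all_card_le_biUnion_card_iff_exists_injective
    (fun A : {A // A ∈ block d b c} => {B ∈ block d a b | B ⊆ A.1})).mp (fun S => by
      rcases S.eq_empty_or_nonempty with rfl | ⟨A₀, hA₀⟩
      · simp
      have hS : S.map (Function.Embedding.subtype _) ⊆ block d b c := fun A hA => by
        obtain ⟨A', -, rfl⟩ := mem_map.mp hA
        exact A'.2
      have h := card_mul_card_block_le (a := a) hS
      rw [card_map] at h
      have hpos : 0 < #(block d b c) := card_pos.mpr ⟨_, A₀.2⟩
      refine (Nat.le_of_mul_le_mul_right (h.trans (Nat.mul_le_mul_left _ hcard))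
        (hpos.trans_le hcard)).trans (card_le_card fun B hB => ?_)
      obtain ⟨hB, A, hA, hBA⟩ := mem_filter.mp hB
      obtain ⟨A', hA', rfl⟩ := mem_map.mp hA
      exact mem_biUnion.mpr ⟨A', hA', mem_filter.mpr ⟨hB, hBA⟩⟩)
  obtain ⟨f, hf, hfm⟩ := hall
  refine ⟨fun A => if hA : A ∈ block d b c then f ⟨A, hA⟩ else ∅, ?_, ?_⟩
  · intro A hA A' hA' h
    rw [mem_coe] at hA hA'
    simp only [hA, hA', dif_pos] at h
    exact congrArg Subtype.val (hf h)
  · intro A hA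
    simp only [hA, dif_pos]
    simpa using hfm ⟨A, hA⟩

/-! ### Composing the matchings -/

/-- Every member `A` of the top family starts a descending chain `c A m = A, …, c A 0` obtained by
applying the matchings in turn; injectivity of each level makes the chains disjoint as soon as
the families are. -/
lemma exists_chains {d : ℕ} (V : ℕ → Finset (Finset (Fin d))) (m : ℕ)
    (hf : ∀ i < m, ∃ f : Finset (Fin d) → Finset (Fin d), Set.InjOn f (V (i + 1)) ∧
      ∀ A ∈ V (i + 1), f A ∈ V i ∧ f A ⊆ A) :
    ∃ c : Finset (Fin d) → ℕ → Finset (Fin d),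
      (∀ A ∈ V m, ∀ i ≤ m, c A i ∈ V i) ∧
      (∀ A ∈ V m, ∀ i < m, c A i ⊆ c A (i + 1)) ∧
      (∀ A, c A m = A) ∧
      ∀ i ≤ m, Set.InjOn (fun A => c A i) (V m) := by
  induction m with
  | zero =>
    refine ⟨fun A _ => A, ?_, ?_, fun _ => rfl, fun i _ => Set.injOn_id _⟩
    · intro A hA i hi
      obtain rfl : i = 0 := by omega
      exact hA
    · intro A hA i hi
      omega
  | succ m ih =>
    obtain ⟨c, hcV, hcsub, hctop, hcinj⟩ := ih fun i hi => hf i (by omega)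
    obtain ⟨f, hfinj, hfV⟩ := hf m (by omega)
    refine ⟨fun A i => if i ≤ m then c (f A) i else A, ?_, ?_, ?_, ?_⟩
    · intro A hA i hi
      by_cases him : i ≤ m
      · simpa [him] using hcV _ (hfV A hA).1 i him
      · obtain rfl : i = m + 1 := by omega
        simpa using hA
    · intro A hA i hi
      by_cases him : i < m
      · simpa [him.le, Nat.succ_le_iff.mpr him] using hcsub _ (hfV A hA).1 i him
      · obtain rfl : i = m := by omega
        simpa [hctop] using (hfV A hA).2
    · intro A
      simp
    · intro i hi
      by_cases him : i ≤ m
      · simp only [him, if_true]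
        exact (hcinj i him).comp hfinj fun A hA => (hfV A hA).1
      · simp only [him, if_false]
        exact Set.injOn_id _

/-! ### The parity function -/

/-- The parity of a monotone map with values at most `k` is `k`-monotone. -/
lemma kMonotone_odd {α : Type*} [Preorder α] (ℓ : α → ℕ) (hℓ : Monotone ℓ) (k : ℕ)
    (hlt : ∀ x, ℓ x ≤ k) : KMonotone (fun x => decide (Odd (ℓ x))) k := by
  rintro ⟨x, hx, h0, halt⟩
  have key : ∀ (i : ℕ) (hi : i < k + 1), i + 1 ≤ ℓ (x ⟨i, hi⟩) := by
    intro i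
    induction i with
    | zero =>
      intro hi
      have : Odd (ℓ (x 0)) := by simpa using h0
      exact this.pos
    | succ i ih =>
      intro hi
      have h1 := ih (by omega)
      have h2 : ℓ (x ⟨i, by omega⟩) ≤ ℓ (x ⟨i + 1, hi⟩) :=
        hℓ (hx (Fin.mk_le_mk.mpr (Nat.le_succ i)))
      have h3 : ℓ (x ⟨i, by omega⟩) ≠ ℓ (x ⟨i + 1, hi⟩) := by
        intro h
        refine halt ⟨i, by omega⟩ ?_
        simp only [Fin.castSucc_mk, Fin.succ_mk, h]
      omega
  have := key k (by omega)
  have := hlt (x ⟨k, by omega⟩)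
  omega

/-- The vertex of the cube with support `A`. -/
def vertex {d : ℕ} (A : Finset (Fin d)) : Fin d → Bool := fun i => decide (i ∈ A)

/-- The weight of a vertex of the cube: its number of ones. -/
def weight {d : ℕ} (x : Fin d → Bool) : ℕ := #{i | x i = true}

lemma weight_vertex {d : ℕ} (A : Finset (Fin d)) : weight (vertex A) = #A := by
  simp [weight, vertex]

lemma weight_mono {d : ℕ} : Monotone (weight (d := d)) := by
  intro x y hxy
  refine card_le_card fun i hi => ?_
  simp only [mem_filter, mem_univ, true_and] at hi ⊢
  have := hxy i
  rw [hi] at this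
  exact top_le_iff.mp this

lemma vertex_injective {d : ℕ} : Function.Injective (vertex (d := d)) := by
  intro A B h
  ext i
  simpa [vertex] using congrFun h i

lemma vertex_mono {d : ℕ} : Monotone (vertex (d := d)) := by
  intro A B h i
  by_cases hi : i ∈ A
  · simp [vertex, hi, h hi]
  · simp [vertex, hi]

/-- The number of thresholds among `t 1, …, t (k-1)` that do not exceed the weight `w`. -/
def bandIndex (k : ℕ) (t : ℕ → ℕ) (w : ℕ) : ℕ := #{i ∈ Ico 1 k | t i ≤ w}

lemma bandIndex_mono (k : ℕ) (t : ℕ → ℕ) : Monotone (bandIndex k t) := by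
  intro v w h
  refine card_le_card fun i hi => ?_
  simp only [mem_filter] at hi ⊢
  exact ⟨hi.1, hi.2.trans h⟩

lemma bandIndex_le (k : ℕ) (t : ℕ → ℕ) (w : ℕ) : bandIndex k t w ≤ k - 1 :=
  (card_filter_le _ _).trans (by simp)

lemma bandIndex_eq {k : ℕ} {t : ℕ → ℕ} (ht : ∀ i < k, t i < t (i + 1)) {i w : ℕ} (hi : i < k)
    (h1 : t i ≤ w) (h2 : w < t (i + 1)) : bandIndex k t w = i := by
  have hmono : ∀ j ≤ k, ∀ i ≤ j, t i ≤ t j := by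
    intro j hj i hij
    induction j, hij using Nat.le_induction with
    | base => exact le_rfl
    | succ j hij ih => exact (ih (by omega)).trans (ht j (by omega)).le
  have : ({j ∈ Ico 1 k | t j ≤ w} : Finset ℕ) = Ico 1 (i + 1) := by
    ext j
    simp only [mem_filter, mem_Ico]
    constructor
    · rintro ⟨⟨hj1, hjk⟩, hj⟩
      refine ⟨hj1, ?_⟩
      by_contra hcon
      have := hmono j hjk.le (i + 1) (by omega)
      omega
    · rintro ⟨hj1, hj⟩
      exact ⟨⟨hj1, by omega⟩, (hmono i hi.le j (by omega)).trans h1⟩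
  rw [bandIndex, this, Nat.card_Ico]
  omega

/-! ### Assembling the chains -/

/-- For every `k ≥ 1` and `δ > 0`, for all large enough `d` there is a `(k-1)`-monotone
function `h` on `{0,1}^d` with at least `(1-δ)·2^d/k` vertex-disjoint alternating chains
of length `k` starting at value `0`. -/
theorem exists_kMonotone_with_many_disjoint_chains (k : ℕ) (hk : 1 ≤ k)
    (δ : ℝ) (hδ : 0 < δ) :
    ∃ D : ℕ, ∀ d : ℕ, D ≤ d →
      ∃ h : (Fin d → Bool) → Bool, KMonotone h (k - 1) ∧
        ∃ T : Finset (Fin k → (Fin d → Bool)),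
          (∀ c ∈ T, Monotone c) ∧
          (∀ c ∈ T, h (c ⟨0, hk⟩) = false) ∧
          (∀ c ∈ T, ∀ i : ℕ, (hi : i + 1 < k) →
            h (c ⟨i, Nat.lt_of_succ_lt hi⟩) ≠ h (c ⟨i + 1, hi⟩)) ∧
          (∀ c ∈ T, ∀ c' ∈ T, c ≠ c' → Disjoint (Set.range c) (Set.range c')) ∧
          ((1 - δ) * 2 ^ d / k : ℝ) ≤ T.card := by
  classical
  have hk0 : (0 : ℝ) < k := by exact_mod_cast hk
  -- `2k²M ≤ δ·2^d` bounds the loss in the last block; `2k²M ≤ 2^d/2` keeps all blocks nonempty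
  obtain ⟨D, hD⟩ := exists_choose_le (min δ (1 / 2) / (2 * k ^ 2)) (by positivity)
  refine ⟨D, fun d hd => ?_⟩
  set M : ℝ := min δ (1 / 2) / (2 * k ^ 2) * 2 ^ d with hMdef
  have hMk : 2 * k ^ 2 * M = min δ (1 / 2) * 2 ^ d := by rw [hMdef]; field_simp
  have h2d : (0 : ℝ) < 2 ^ d := by positivity
  obtain ⟨t, hmono, hdec, hlast⟩ := exists_thresholds k hk d M (hD d hd) (by
    rw [hMk]
    nlinarith [min_le_right δ (1 / 2)])
  set V : ℕ → Finset (Finset (Fin d)) := fun i => block d (t i) (t (i + 1)) with hV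
  obtain ⟨c, hcV, hcsub, -, hcinj⟩ := exists_chains V (k - 1) fun i hi =>
    exists_matching (by rw [card_block, card_block]; exact hdec i (by omega))
  have hband : ∀ A ∈ V (k - 1), ∀ i < k, bandIndex k t (weight (vertex (c A i))) = i := by
    intro A hA i hi
    have := mem_block.mp (hcV A hA i (by omega))
    exact bandIndex_eq hmono hi (by rw [weight_vertex]; exact this.1)
      (by rw [weight_vertex]; exact this.2)
  refine ⟨fun x => decide (Odd (bandIndex k t (weight x))),
    kMonotone_odd _ ((bandIndex_mono k t).comp weight_mono) _ fun x => bandIndex_le k t _,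
    (V (k - 1)).image fun A (i : Fin k) => vertex (c A i), ?_, ?_, ?_, ?_, ?_⟩
  · intro x hx
    obtain ⟨A, hA, rfl⟩ := mem_image.mp hx
    intro i j hij
    refine vertex_mono ?_
    have : ∀ j ≤ k - 1, ∀ i ≤ j, c A i ⊆ c A j := by
      intro j hj i hij
      induction j, hij using Nat.le_induction with
      | base => exact Subset.refl _
      | succ j hij ih => exact (ih (by omega)).trans (hcsub A hA j (by omega))
    exact this j (by omega) i hij
  · intro x hx
    obtain ⟨A, hA, rfl⟩ := mem_image.mp hx
    simp [hband A hA 0 hk]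
  · intro x hx i hi
    obtain ⟨A, hA, rfl⟩ := mem_image.mp hx
    simp only [hband A hA i (by omega), hband A hA (i + 1) hi]
    rw [Ne, decide_eq_decide, Nat.odd_add_one]
    tauto
  · intro x hx y hy hxy
    obtain ⟨A, hA, rfl⟩ := mem_image.mp hx
    obtain ⟨B, hB, rfl⟩ := mem_image.mp hy
    rw [Set.disjoint_left]
    rintro _ ⟨i, rfl⟩ ⟨j, hj⟩
    apply hxy
    -- a common vertex lies in the same block of both chains, so the chains coincide
    have hij : (j : ℕ) = i := by
      rw [← hband A hA i i.2, ← hband B hB j j.2]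
      exact congrArg (fun x => bandIndex k t (weight x)) hj
    have hAB : B = A := by
      refine hcinj i (by omega) hB hA ?_
      have := vertex_injective hj
      rwa [hij] at this
    rw [hAB]
  · rw [card_image_of_injOn]
    · have hkk : k - 1 + 1 = k := by omega
      rw [hV]
      simp only [card_block, hkk]
      refine le_trans ?_ hlast
      rw [div_le_iff₀ hk0, sub_mul _ _ (k : ℝ), div_mul_cancel₀ _ hk0.ne']
      nlinarith [min_le_left δ (1 / 2)]
    · intro A hA B hB h
      exact hcinj 0 (by omega) hA hB (vertex_injective (congrFun h ⟨0, hk⟩))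
end

section
/- Let n ≥ 2 and let f : {1,…,n}² → {0,1} be 2-column-wise monotone with f(1,j) = f(n,j) = 0 for every j. If both sequences j ↦ lseq_f(j) and j ↦ hseq_f(j) are non-increasing in j, then f is 2-monotone on {1,…,n}² with the coordinatewise partial order. -/
/-!
In each column the `1`s occupy exactly the heights strictly between `lseq` and `hseq`:
every `1` lies there (`lseq_lt_and_lt_hseq`), and every height there is enclosed by two
`1`s of the column (`exists_true_le_and_ge`), so 2-monotonicity of the column forces a `1`.

Suppose `(a, j₁) ≤ (b, j₂) ≤ (c, j₃)` carries the values `1, 0, 1`. Since both sequences are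
non-increasing, `lseq j₂ ≤ lseq j₁ < a ≤ b ≤ c < hseq j₃ ≤ hseq j₂`, so `b` lies strictly
between `lseq j₂` and `hseq j₂`, which contradicts `f (b, j₂) = 0`.
-/

open scoped Classical

/-- `f` is `k`-monotone on `S`: there is no violating chain for `(f, k)` inside `S`. -/
def KMonotoneOn {α : Type*} [Preorder α] (f : α → Bool) (k : ℕ) (S : Set α) : Prop :=
  ¬ ∃ x : Fin (k + 1) → α, (∀ i, x i ∈ S) ∧ IsViolChain f k x

/-- `f : {1,…,n}² → {0,1}` (row `i`, column `j`) is 2-column-wise monotone: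
for every column `j`, the function `i ↦ f(i,j)` is 2-monotone on `{1,…,n}`. -/
def ColWise2Mono (n : ℕ) (f : ℕ × ℕ → Bool) : Prop :=
  ∀ j ∈ Set.Icc 1 n, KMonotoneOn (fun i => f (i, j)) 2 (Set.Icc 1 n)

/-- `lseq_f(j)`: if `i ↦ f(i,j)` is not constant on `{1,…,n}`, this is
`min {i : f(i,j) ≠ f(1,j)} − 1`; otherwise it is `1`. -/
noncomputable def lseq (n : ℕ) (f : ℕ × ℕ → Bool) (j : ℕ) : ℕ :=
  if ∃ i ∈ Set.Icc 1 n, ∃ i' ∈ Set.Icc 1 n, f (i, j) ≠ f (i', j) then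
    sInf {i | i ∈ Set.Icc 1 n ∧ f (i, j) ≠ f (1, j)} - 1
  else 1

/-- `hseq_f(j)`: if `i ↦ f(i,j)` is not constant on `{1,…,n}`, this is
`max {i : f(i,j) ≠ f(n,j)} + 1`; otherwise it is `1`. -/
noncomputable def hseq (n : ℕ) (f : ℕ × ℕ → Bool) (j : ℕ) : ℕ :=
  if ∃ i ∈ Set.Icc 1 n, ∃ i' ∈ Set.Icc 1 n, f (i, j) ≠ f (i', j) then
    sSup {i | i ∈ Set.Icc 1 n ∧ f (i, j) ≠ f (n, j)} + 1
  else 1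

/-- A `1` at height `i` of column `j` lies strictly between `lseq` and `hseq`. -/
lemma lseq_lt_and_lt_hseq {n : ℕ} {f : ℕ × ℕ → Bool} {i j : ℕ}
    (h1 : f (1, j) = false) (hlast : f (n, j) = false)
    (hi : i ∈ Set.Icc 1 n) (hf : f (i, j) = true) :
    lseq n f j < i ∧ i < hseq n f j := by
  have hne : ∃ i ∈ Set.Icc 1 n, ∃ i' ∈ Set.Icc 1 n, f (i, j) ≠ f (i', j) :=
    ⟨i, hi, 1, ⟨le_rfl, hi.1.trans hi.2⟩, by simp [hf, h1]⟩
  have hinf : sInf {i | i ∈ Set.Icc 1 n ∧ f (i, j) ≠ f (1, j)} ≤ i :=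
    Nat.sInf_le ⟨hi, by simp [hf, h1]⟩
  have hsup : i ≤ sSup {i | i ∈ Set.Icc 1 n ∧ f (i, j) ≠ f (n, j)} :=
    le_csSup ⟨n, fun _ hx => hx.1.2⟩ ⟨hi, by simp [hf, hlast]⟩
  have := hi.1
  rw [lseq, hseq, if_pos hne, if_pos hne]
  omega

/-- A height strictly between `lseq` and `hseq` is weakly between two `1`s of the column.
A constant column has `hseq = 1`, so it has no such height `b ≥ 1`. -/
lemma exists_true_le_and_ge {n : ℕ} {f : ℕ × ℕ → Bool} {b j : ℕ}
    (h1 : f (1, j) = false) (hlast : f (n, j) = false) (hb : 1 ≤ b)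
    (hlo : lseq n f j < b) (hhi : b < hseq n f j) :
    ∃ p ∈ Set.Icc 1 n, ∃ q ∈ Set.Icc 1 n,
      p ≤ b ∧ b ≤ q ∧ f (p, j) = true ∧ f (q, j) = true := by
  by_cases hne : ∃ i ∈ Set.Icc 1 n, ∃ i' ∈ Set.Icc 1 n, f (i, j) ≠ f (i', j)
  · rw [lseq, if_pos hne] at hlo
    rw [hseq, if_pos hne] at hhi
    obtain ⟨r, hr, hfr⟩ : ∃ r ∈ Set.Icc 1 n, f (r, j) = true := by
      obtain ⟨i, hi, i', hi', h⟩ := hne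
      cases hfi : f (i, j)
      · exact ⟨i', hi', by simpa [hfi] using h⟩
      · exact ⟨i, hi, hfi⟩
    have hinf := Nat.sInf_mem (s := {i | i ∈ Set.Icc 1 n ∧ f (i, j) ≠ f (1, j)})
      ⟨r, hr, by simp [hfr, h1]⟩
    have hsup := Nat.sSup_mem (s := {i | i ∈ Set.Icc 1 n ∧ f (i, j) ≠ f (n, j)})
      ⟨r, hr, by simp [hfr, hlast]⟩ ⟨n, fun _ hx => hx.1.2⟩
    exact ⟨_, hinf.1, _, hsup.1, by omega, by omega,
      by simpa [h1] using hinf.2, by simpa [hlast] using hsup.2⟩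
  · rw [hseq, if_neg hne] at hhi
    omega

/-- If `f` is 2-column-wise monotone, vanishes on the first and last rows, and both
`lseq_f` and `hseq_f` are non-increasing, then `f` is 2-monotone on `{1,…,n}²`. -/
theorem two_monotone_of_antitone_lseq_hseq (n : ℕ) (hn : 2 ≤ n) (f : ℕ × ℕ → Bool)
    (hcw : ColWise2Mono n f)
    (hbd : ∀ j ∈ Set.Icc 1 n, f (1, j) = false ∧ f (n, j) = false)
    (hl : ∀ j ∈ Set.Icc 1 n, ∀ j' ∈ Set.Icc 1 n, j ≤ j' → lseq n f j' ≤ lseq n f j)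
    (hh : ∀ j ∈ Set.Icc 1 n, ∀ j' ∈ Set.Icc 1 n, j ≤ j' → hseq n f j' ≤ hseq n f j) :
    KMonotoneOn f 2 (Set.Icc 1 n ×ˢ Set.Icc 1 n) := by
  rintro ⟨x, hx, hmono, h0, halt⟩
  have hf1 : f (x 1) = false := by
    have h := halt 0
    change f (x 0) ≠ f (x 1) at h
    simpa [h0] using h.symm
  have hf2 : f (x 2) = true := by
    have h := halt 1
    change f (x 1) ≠ f (x 2) at h
    simpa [hf1] using h.symm
  have h01 : x 0 ≤ x 1 := hmono (by decide)
  have h12 : x 1 ≤ x 2 := hmono (by decide)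
  have m0 := hx 0
  have m1 := hx 1
  have m2 := hx 2
  generalize x 0 = u at *
  generalize x 1 = v at *
  generalize x 2 = w at *
  obtain ⟨a, j₁⟩ := u
  obtain ⟨b, j₂⟩ := v
  obtain ⟨c, j₃⟩ := w
  obtain ⟨hab, hj12⟩ := Prod.mk_le_mk.1 h01
  obtain ⟨hbc, hj23⟩ := Prod.mk_le_mk.1 h12
  obtain ⟨ha, hj1⟩ := Set.mem_prod.1 m0
  obtain ⟨hb, hj2⟩ := Set.mem_prod.1 m1
  obtain ⟨hc, hj3⟩ := Set.mem_prod.1 m2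
  have hlo := (lseq_lt_and_lt_hseq (hbd _ hj1).1 (hbd _ hj1).2 ha h0).1
  have hhi := (lseq_lt_and_lt_hseq (hbd _ hj3).1 (hbd _ hj3).2 hc hf2).2
  have hl12 := hl _ hj1 _ hj2 hj12
  have hh23 := hh _ hj2 _ hj3 hj23
  obtain ⟨p, hp, q, hq, hpb, hbq, hfp, hfq⟩ :=
    exists_true_le_and_ge (hbd _ hj2).1 (hbd _ hj2).2 hb.1 (by omega) (by omega)
  refine hcw _ hj2 ⟨![p, b, q], ?_, ?_, ?_, ?_⟩
  · intro i
    fin_cases i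
    exacts [hp, hb, hq]
  · rw [Fin.monotone_iff_le_succ]
    intro i
    fin_cases i
    exacts [hpb, hbq]
  · exact hfp
  · intro i
    fin_cases i
    · change f (p, j₂) ≠ f (b, j₂)
      simp [hfp, hf1]
    · change f (b, j₂) ≠ f (q, j₂)
      simp [hfq, hf1]
end

section
/- Block approximation of k-monotone functions: let k, d, m, r ≥ 1 be integers, set n = m·r, and let f : [n]^d → {0,1} be k-monotone, where [n] = {0,1,…,n−1} and [n]^d carries the coordinatewise order. Call h : [n]^d → {0,1} an m-block function if h(y) depends only on the tuple (⌊y₁/r⌋, …, ⌊y_d/r⌋) ∈ [m]^d. Then there exists an m-block function h such that the number of points y ∈ [n]^d with f(y) ≠ h(y) is at most k·d·m^{d−1}·r^d (equivalently, the normalized Hamming distance between f and h is at most k·d/m). -/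
/-!
The approximant `h` takes on each block the value of `f` at the block's lowest corner. It errs only
on *bad* blocks, those on which `f` is not constant, and a block has at most `r ^ d` points, so it
is enough to show that there are at most `k * d * m ^ (d - 1)` bad blocks.

The block indices `[m]^d` are covered by the `d * m ^ (d - 1)` diagonals `c, c + 1, c + 2, …` whose
starting point `c` has a vanishing coordinate. Along a diagonal, every point of a block lies below
every point of a later block, so an alternating chain of `f` passing through the diagonal gains at
least one value change from each bad block: whatever value the chain has reached, the corner of the
block or a point above it in the block has the opposite value. If `t` blocks are bad, this gives a
chain that starts at the value `1` and has `t - 1` changes (one is lost when the first value is `0`;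
see `reach_of_diagonal`). As `f` is `k`-monotone, `t - 1 < k`, so each diagonal has at most
`k` bad blocks (`card_bad_diagonal_le`).
-/

open scoped Classical

/-- `Reach f c x`: some chain that starts at a point where `f` is `1` and ends at `x` has exactly
`c` steps, each of which changes the value of `f`. -/
inductive Reach {α : Type*} [Preorder α] (f : α → Bool) : ℕ → α → Prop
  | start (x : α) : f x = true → Reach f 0 x
  | step (c : ℕ) (x y : α) : Reach f c x → x ≤ y → f x ≠ f y → Reach f (c + 1) y

lemma Reach.exists_chain {α : Type*} [Preorder α] {f : α → Bool} {c : ℕ} {x : α}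
    (h : Reach f c x) :
    ∃ z : Fin (c + 1) → α, IsViolChain f c z ∧ z (Fin.last c) = x := by
  induction h with
  | start x hx =>
    refine ⟨fun _ => x, ⟨fun _ _ _ => le_rfl, hx, fun i => i.elim0⟩, rfl⟩
  | step c x y _ hxy hne ih =>
    obtain ⟨z, ⟨hmono, h0, halt⟩, hlast⟩ := ih
    refine ⟨Fin.snoc (α := fun _ => α) z y, ⟨?_, ?_, ?_⟩, by simp⟩
    · rw [Fin.monotone_iff_le_succ]
      intro i
      induction i using Fin.lastCases with
      | last => simpa [hlast] using hxy
      | cast i =>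
        rw [Fin.succ_castSucc, Fin.snoc_castSucc, Fin.snoc_castSucc]
        exact hmono (Fin.castSucc_le_succ i)
    · rw [← Fin.castSucc_zero, Fin.snoc_castSucc]
      exact h0
    · intro i
      induction i using Fin.lastCases with
      | last => simpa [hlast] using hne
      | cast i =>
        rw [Fin.succ_castSucc, Fin.snoc_castSucc, Fin.snoc_castSucc]
        exact halt i

lemma Reach.of_le {α : Type*} [Preorder α] {f : α → Bool} {a c : ℕ} (hac : a ≤ c) {x : α}
    (h : Reach f c x) : ∃ y, Reach f a y := by
  induction h with
  | start x hx => exact ⟨x, by simpa [Nat.le_zero.mp hac] using Reach.start x hx⟩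
  | step c x y hx hxy hne ih =>
    rcases Nat.le_succ_iff.mp hac with h | h
    · exact ih h
    · exact ⟨y, h ▸ Reach.step c x y hx hxy hne⟩

lemma Reach.lt_of_kMonotone {α : Type*} [Preorder α] {f : α → Bool} {k c : ℕ}
    (hf : KMonotone f k) {x : α} (h : Reach f c x) : c < k := by
  by_contra! hkc
  obtain ⟨y, hy⟩ := h.of_le hkc
  obtain ⟨z, hz, -⟩ := hy.exists_chain
  exact hf ⟨z, hz⟩

/-- The index in `[m]^d` of the block containing `y`. -/
def blockIdx {d m r : ℕ} (y : Fin d → Fin (m * r)) : Fin d → Fin m :=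
  fun i => ⟨(y i : ℕ) / r, Nat.div_lt_of_lt_mul ((y i).2.trans_eq (mul_comm _ _))⟩

/-- The least point of the block with index `b`. -/
def corner {d m r : ℕ} (hr : 1 ≤ r) (b : Fin d → Fin m) : Fin d → Fin (m * r) :=
  fun i => ⟨(b i : ℕ) * r, Nat.mul_lt_mul_of_pos_right (b i).2 hr⟩

/-- A block is bad if `f` takes there a value other than its value at the lowest corner,
that is, if `f` is not constant on the block. -/
def BadBlock {d m r : ℕ} (hr : 1 ≤ r) (f : (Fin d → Fin (m * r)) → Bool)
    (b : Fin d → Fin m) : Prop :=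
  ∃ y, blockIdx y = b ∧ f (corner hr b) ≠ f y

lemma corner_le {d m r : ℕ} (hr : 1 ≤ r) (y : Fin d → Fin (m * r)) :
    corner hr (blockIdx y) ≤ y := by
  intro i
  rw [Fin.le_def]
  exact Nat.div_mul_le_self _ _

lemma blockIdx_corner {d m r : ℕ} (hr : 1 ≤ r) (b : Fin d → Fin m) :
    blockIdx (corner hr b) = b := by
  funext i
  apply Fin.ext
  exact Nat.mul_div_cancel _ hr

lemma le_of_blockIdx_lt {d m r : ℕ} {x y : Fin d → Fin (m * r)}
    (h : ∀ i, (blockIdx x i : ℕ) < blockIdx y i) : x ≤ y := by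
  intro i
  rw [Fin.le_def]
  by_contra! hlt
  exact absurd (h i) (not_lt.mpr (Nat.div_le_div_right hlt.le))

/-- The block `c + (j, …, j)` on the diagonal starting at `c` exists and is bad. -/
def BadAt {d m r : ℕ} (hr : 1 ≤ r) (f : (Fin d → Fin (m * r)) → Bool)
    (c : Fin d → ℕ) (j : ℕ) : Prop :=
  ∃ b, BadBlock hr f b ∧ ∀ i, (b i : ℕ) = c i + j

/-- If `t + 1` of the first `N` blocks on a diagonal are bad, then `t` value changes can be
collected by a chain whose endpoint lies in a block strictly below the `N`-th one. -/
lemma reach_of_diagonal {d m r : ℕ} (hr : 1 ≤ r) (f : (Fin d → Fin (m * r)) → Bool)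
    (c : Fin d → ℕ) (N : ℕ) : ∀ t, ((Finset.range N).filter (BadAt hr f c)).card = t + 1 →
      ∃ x, Reach f t x ∧ ∀ i, (blockIdx x i : ℕ) < c i + N := by
  induction N with
  | zero => intro t ht; simp at ht
  | succ N ih =>
    intro t ht
    by_cases hN : BadAt hr f c N
    · rw [Finset.range_add_one, Finset.filter_insert, if_pos hN,
        Finset.card_insert_of_notMem (by simp)] at ht
      obtain ⟨b, ⟨v, hv, hne⟩, hb⟩ := hN
      have hle : corner hr b ≤ v := hv ▸ corner_le hr v
      have hcb : ∀ i, (blockIdx (corner hr b) i : ℕ) < c i + (N + 1) := by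
        intro i; rw [blockIdx_corner, hb]; omega
      have hvb : ∀ i, (blockIdx v i : ℕ) < c i + (N + 1) := by
        intro i; rw [hv, hb]; omega
      rcases t with _ | t
      · -- The first bad block: a chain starts at whichever of the two points has value `1`.
        by_cases h1 : f (corner hr b) = true
        · exact ⟨_, Reach.start _ h1, hcb⟩
        · refine ⟨v, Reach.start _ ?_, hvb⟩
          cases h2 : f v <;> simp_all
      · obtain ⟨x, hx, hxN⟩ := ih t (by omega)
        have hxc : x ≤ corner hr b := by
          apply le_of_blockIdx_lt
          intro i
          rw [blockIdx_corner, hb]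
          exact hxN i
        by_cases h1 : f x = f (corner hr b)
        · exact ⟨v, Reach.step _ _ _ hx (hxc.trans hle) (h1 ▸ hne), hvb⟩
        · exact ⟨_, Reach.step _ _ _ hx hxc h1, hcb⟩
    · rw [Finset.range_add_one, Finset.filter_insert, if_neg hN] at ht
      obtain ⟨x, hx, hxN⟩ := ih t ht
      exact ⟨x, hx, fun i => (hxN i).trans (by omega)⟩

lemma card_badAt_le {d m r k : ℕ} (hr : 1 ≤ r) {f : (Fin d → Fin (m * r)) → Bool}
    (hf : KMonotone f k) (c : Fin d → ℕ) (N : ℕ) :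
    ((Finset.range N).filter (BadAt hr f c)).card ≤ k := by
  rcases h : ((Finset.range N).filter (BadAt hr f c)).card with _ | t
  · exact Nat.zero_le _
  · obtain ⟨x, hx, -⟩ := reach_of_diagonal hr f c N t h
    exact hx.lt_of_kMonotone hf

lemma card_bad_diagonal_le {d m r k : ℕ} (hr : 1 ≤ r)
    {f : (Fin (d + 1) → Fin (m * r)) → Bool} (hf : KMonotone f k) (c : Fin (d + 1) → ℕ) :
    (Finset.univ.filter (fun b : Fin (d + 1) → Fin m =>
      BadBlock hr f b ∧ ∃ j, ∀ i, (b i : ℕ) = c i + j)).card ≤ k := by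
  refine le_trans ?_ (card_badAt_le hr hf c m)
  -- A block on the diagonal is determined by its offset, which coordinate `0` reveals.
  apply Finset.card_le_card_of_injOn (fun b => (b 0 : ℕ) - c 0)
  · intro b hb
    simp only [Finset.coe_filter, Finset.mem_univ, true_and, Set.mem_ofPred_eq] at hb
    obtain ⟨hbad, j, hj⟩ := hb
    have h0 := hj 0
    have hlt := (b 0).2
    have hj0 : (b 0 : ℕ) - c 0 = j := by omega
    simp only [Finset.coe_filter, Finset.mem_range, Set.mem_ofPred_eq, hj0]
    exact ⟨by omega, b, hbad, hj⟩
  · intro b hb b' hb' heq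
    simp only [Finset.coe_filter, Finset.mem_univ, true_and, Set.mem_ofPred_eq] at hb hb'
    obtain ⟨-, j, hj⟩ := hb
    obtain ⟨-, j', hj'⟩ := hb'
    have h0 := hj 0
    have h0' := hj' 0
    simp only at heq
    funext i
    apply Fin.ext
    rw [hj, hj']
    omega

lemma card_badBlock_le {d m r k : ℕ} (hr : 1 ≤ r)
    {f : (Fin (d + 1) → Fin (m * r)) → Bool} (hf : KMonotone f k) :
    (Finset.univ.filter (BadBlock hr f)).card ≤ (d + 1) * m ^ d * k := by
  -- A diagonal is indexed by a vanishing coordinate of its start and the other coordinates.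
  let c : Fin (d + 1) × (Fin d → Fin m) → Fin (d + 1) → ℕ :=
    fun p => Fin.insertNth (α := fun _ => ℕ) p.1 0 (fun l => (p.2 l : ℕ))
  have hsub : Finset.univ.filter (BadBlock hr f) ⊆
      Finset.univ.biUnion (fun p => Finset.univ.filter (fun b : Fin (d + 1) → Fin m =>
        BadBlock hr f b ∧ ∃ j, ∀ i, (b i : ℕ) = c p i + j)) := by
    intro b hb
    simp only [Finset.mem_filter, Finset.mem_univ, true_and] at hb
    obtain ⟨i, hi⟩ := Finite.exists_min b
    simp only [Finset.mem_biUnion, Finset.mem_filter, Finset.mem_univ, true_and]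
    refine ⟨(i, fun l => ⟨(b (i.succAbove l) : ℕ) - b i,
      lt_of_le_of_lt (Nat.sub_le _ _) (b _).2⟩), hb, b i, ?_⟩
    intro l
    induction l using Fin.succAboveCases i with
    | x => simp [c]
    | p l =>
      have := Fin.le_def.mp (hi (i.succAbove l))
      simp only [c, Fin.insertNth_apply_succAbove]
      omega
  refine (Finset.card_le_card hsub).trans ((Finset.card_biUnion_le_card_mul _ _ k
    fun p _ => card_bad_diagonal_le hr hf (c p)).trans ?_)
  simp

lemma card_block_le {d m r : ℕ} (hr : 1 ≤ r) (b : Fin d → Fin m) :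
    (Finset.univ.filter (fun y : Fin d → Fin (m * r) => blockIdx y = b)).card ≤ r ^ d := by
  have hcard : (Finset.univ : Finset (Fin d → Fin r)).card = r ^ d := by simp
  rw [← hcard]
  -- Inside a block, a point is determined by its coordinates modulo `r`.
  apply Finset.card_le_card_of_injOn (fun y i => ⟨(y i : ℕ) % r, Nat.mod_lt _ hr⟩)
  · intro y _; simp
  · intro y hy y' hy' heq
    simp only [Finset.coe_filter, Finset.mem_univ, true_and, Set.mem_ofPred_eq] at hy hy'
    funext i
    have h1 : (y i : ℕ) % r = (y' i : ℕ) % r := congrArg Fin.val (congrFun heq i)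
    have h2 : (y i : ℕ) / r = (y' i : ℕ) / r :=
      congrArg Fin.val (congrFun (hy.trans hy'.symm) i)
    apply Fin.ext
    rw [← Nat.div_add_mod (y i : ℕ) r, ← Nat.div_add_mod (y' i : ℕ) r, h1, h2]

/-- Block approximation: any `k`-monotone function on `[m·r]^d` is `kd/m`-close (in
normalized Hamming distance) to a function constant on each of the `m^d` blocks. -/
theorem kMonotone_close_to_block_function (k d m r : ℕ)
    (hk : 1 ≤ k) (hd : 1 ≤ d) (hm : 1 ≤ m) (hr : 1 ≤ r)
    (f : (Fin d → Fin (m * r)) → Bool) (hf : KMonotone f k) :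
    ∃ h : (Fin d → Fin (m * r)) → Bool,
      (∀ y y' : Fin d → Fin (m * r),
        (∀ i, (y i : ℕ) / r = (y' i : ℕ) / r) → h y = h y') ∧
      (Finset.univ.filter (fun y => f y ≠ h y)).card ≤ k * d * m ^ (d - 1) * r ^ d := by
  obtain ⟨d, rfl⟩ : ∃ d', d = d' + 1 := ⟨d - 1, by omega⟩
  refine ⟨fun y => f (corner hr (blockIdx y)), ?_, ?_⟩
  · intro y y' hyy'
    have : blockIdx y = blockIdx y' := funext fun i => Fin.ext (hyy' i)
    simp only [this]
  · have hmain := Finset.card_le_mul_card_image_of_maps_to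
      (s := Finset.univ.filter (fun y => f y ≠ f (corner hr (blockIdx y))))
      (t := Finset.univ.filter (BadBlock hr f)) (f := blockIdx)
      (fun y hy => by
        simp only [Finset.mem_filter, Finset.mem_univ, true_and] at hy ⊢
        exact ⟨y, rfl, hy.symm⟩) (r ^ (d + 1))
      (fun b _ => (Finset.card_le_card
        (Finset.filter_subset_filter _ (Finset.filter_subset _ _))).trans (card_block_le hr b))
    calc _ ≤ r ^ (d + 1) * (Finset.univ.filter (BadBlock hr f)).card := hmain
      _ ≤ r ^ (d + 1) * ((d + 1) * m ^ d * k) :=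
        Nat.mul_le_mul_left _ (card_badBlock_le hr hf)
      _ = k * (d + 1) * m ^ (d + 1 - 1) * r ^ (d + 1) := by
        rw [Nat.add_sub_cancel]; ring
end

section
/- Few nonconstant blocks: let k, d, m, r ≥ 1 be integers, set n = m·r, and let f : [n]^d → {0,1} be k-monotone, where [n] = {0,1,…,n−1} and [n]^d carries the coordinatewise order. For x ∈ [m]^d, let the block of x be the set of y ∈ [n]^d with ⌊yᵢ/r⌋ = xᵢ for all i. Then the number of x ∈ [m]^d such that f is nonconstant on the block of x is at most k·d·m^{d−1}. -/
/-!
Partition the blocks into diagonals, the lines `x, x + (1,…,1), x + (2,…,2), …` of the coarse grid.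
A block `x` is placed on its diagonal by the position `i` of a least coordinate together with the
`d - 1` differences `x j - x i`, so there are at most `d * m ^ (d - 1)` diagonals
(`card_le_mul_of_diagonals`). Along a diagonal every coordinate of the block strictly increases,
so every point of an earlier block lies below every point of a later one. A nonconstant block
takes both values, so `k + 1` nonconstant blocks on one diagonal would supply an increasing chain
of `k + 1` points with values `1, 0, 1, …`, contradicting `k`-monotonicity
(`KMonotone.no_increasing_blocks`). Hence each diagonal has at most `k` nonconstant blocks.
-/

open scoped Classical

/-- `f` takes two different values on the block of `x`. -/
def NonconstantOnBlock {d m r : ℕ} (f : (Fin d → Fin (m * r)) → Bool) (x : Fin d → Fin m) : Prop :=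
  ∃ y y' : Fin d → Fin (m * r),
    (∀ i, (y i : ℕ) / r = (x i : ℕ)) ∧ (∀ i, (y' i : ℕ) / r = (x i : ℕ)) ∧ f y ≠ f y'

lemma NonconstantOnBlock.exists_eq {d m r : ℕ} {f : (Fin d → Fin (m * r)) → Bool}
    {x : Fin d → Fin m} (h : NonconstantOnBlock f x) (b : Bool) :
    ∃ y : Fin d → Fin (m * r), (∀ i, (y i : ℕ) / r = (x i : ℕ)) ∧ f y = b := by
  obtain ⟨y, y', hy, hy', hne⟩ := h
  by_cases hb : f y = b
  · exact ⟨y, hy, hb⟩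
  · refine ⟨y', hy', ?_⟩
    revert hb hne
    cases f y <;> cases f y' <;> cases b <;> simp

/-- A `k`-monotone function has no `k + 1` nonconstant blocks that increase strictly in every
coordinate: picking points with values `1, 0, 1, …` in them gives a violating chain. -/
lemma KMonotone.no_increasing_blocks {k d m r : ℕ} {f : (Fin d → Fin (m * r)) → Bool}
    (hf : KMonotone f k) (a : Fin (k + 1) → Fin d → Fin m)
    (hlt : ∀ u v, u < v → ∀ i, a u i < a v i) (hn : ∀ u, NonconstantOnBlock f (a u)) : False := by
  choose y hy hfy using fun u : Fin (k + 1) => (hn u).exists_eq (decide ((u : ℕ) % 2 = 0))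
  refine hf ⟨y, ?_, by simp [hfy], ?_⟩
  · intro u v huv
    rcases huv.eq_or_lt with rfl | h
    · exact le_rfl
    · intro i
      have h1 : (a u i : ℕ) < a v i := hlt u v h i
      rw [← hy u i, ← hy v i] at h1
      by_contra hle
      exact absurd h1 (Nat.not_lt.mpr (Nat.div_le_div_right (Fin.le_def.mp (not_le.mp hle).le)))
  · intro i
    rw [hfy, hfy]
    simp only [ne_eq, decide_eq_decide, Fin.val_castSucc, Fin.val_succ]
    omega

/-- A finite set of points of `[m]^d` without `k + 1` members increasing strictly in every
coordinate has at most `k` points on each diagonal, hence at most `k * d * m ^ (d - 1)` points. -/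
lemma card_le_mul_of_diagonals {k d m : ℕ} (hd : 1 ≤ d) (S : Finset (Fin d → Fin m))
    (hS : ∀ a : Fin (k + 1) → Fin d → Fin m, (∀ u v, u < v → ∀ i, a u i < a v i) →
      ¬ ∀ u, a u ∈ S) : S.card ≤ k * d * m ^ (d - 1) := by
  obtain ⟨e, rfl⟩ : ∃ e, d = e + 1 := ⟨d - 1, by omega⟩
  choose p hp using fun x : Fin (e + 1) → Fin m => Finite.exists_min x
  let g : (Fin (e + 1) → Fin m) → Fin (e + 1) × (Fin e → Fin m) := fun x =>
    (p x, fun j => ⟨x ((p x).succAbove j) - x (p x), (Nat.sub_le _ _).trans_lt (Fin.isLt _)⟩)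
  have key : ∀ b ∈ (Finset.univ : Finset (Fin (e + 1) × (Fin e → Fin m))),
      (S.filter (fun x => g x = b)).card ≤ k := by
    rintro ⟨q, c⟩ -
    -- On the diagonal `(q, c)` a point is determined, strictly monotonically, by coordinate `q`.
    have hg : ∀ x, g x = (q, c) → ∀ j, (x (q.succAbove j) : ℕ) = x q + c j := by
      intro x hx j
      obtain ⟨rfl, rfl⟩ := Prod.mk.inj hx
      have := Fin.le_def.mp (hp x ((p x).succAbove j))
      dsimp only
      omega
    have hmono : ∀ x x', g x = (q, c) → g x' = (q, c) → x q < x' q → ∀ i, x i < x' i := by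
      intro x x' hx hx' h i
      rcases Fin.eq_self_or_eq_succAbove q i with rfl | ⟨j, rfl⟩
      · exact h
      · rw [Fin.lt_def, hg x hx, hg x' hx']
        exact Nat.add_lt_add_right h _
    have hinj : Set.InjOn (fun x : Fin (e + 1) → Fin m => x q)
        (S.filter (fun x => g x = (q, c)) : Finset _) := by
      intro x hx x' hx' h
      have hx := (Finset.mem_filter.mp hx).2
      have hx' := (Finset.mem_filter.mp hx').2
      funext i
      rcases Fin.eq_self_or_eq_succAbove q i with rfl | ⟨j, rfl⟩
      · exact h
      · apply Fin.ext
        rw [hg x hx, hg x' hx', show x q = x' q from h]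
    by_contra! hcard
    rw [← Finset.card_image_of_injOn hinj] at hcard
    obtain ⟨t, ht, htc⟩ := Finset.exists_subset_card_eq (Nat.succ_le_of_lt hcard)
    have hmem : ∀ u, ∃ x ∈ S.filter (fun x => g x = (q, c)), x q = t.orderEmbOfFin htc u :=
      fun u => Finset.mem_image.mp (ht (t.orderEmbOfFin_mem htc u))
    choose a ha haq using hmem
    refine hS a (fun u v huv => ?_) fun u => (Finset.mem_filter.mp (ha u)).1
    refine hmono _ _ (Finset.mem_filter.mp (ha u)).2 (Finset.mem_filter.mp (ha v)).2 ?_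
    rw [haq, haq]
    exact (t.orderEmbOfFin htc).strictMono huv
  have := Finset.card_le_mul_card_image_of_maps_to (f := g) (fun x _ => Finset.mem_univ (g x)) k key
  simpa [mul_assoc] using this

/-- Few nonconstant blocks: a `k`-monotone function on `[m·r]^d` is nonconstant on at most
`k·d·m^{d-1}` of the `m^d` blocks. -/
theorem kMonotone_few_nonconstant_blocks (k d m r : ℕ)
    (hk : 1 ≤ k) (hd : 1 ≤ d) (hm : 1 ≤ m) (hr : 1 ≤ r)
    (f : (Fin d → Fin (m * r)) → Bool) (hf : KMonotone f k) :
    (Finset.univ.filter (fun x : Fin d → Fin m =>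
      ∃ y y' : Fin d → Fin (m * r),
        (∀ i, (y i : ℕ) / r = (x i : ℕ)) ∧ (∀ i, (y' i : ℕ) / r = (x i : ℕ)) ∧
        f y ≠ f y')).card ≤ k * d * m ^ (d - 1) := by
  refine card_le_mul_of_diagonals hd _ fun a hlt ha => ?_
  exact hf.no_increasing_blocks a hlt fun u => (Finset.mem_filter.mp (ha u)).2
end

section
/- Counting truncated anti-parities violated by a query set: let d, k, t be integers with 1 ≤ k ≤ t ≤ d. For S ⊆ {1,…,d} with |S| = t, define f_S : {0,1}^d → {0,1} by f_S(x) = NOT(⊕_{i∈S} xᵢ) if ||x| − d/2| ≤ √d, and f_S(x) = 0 otherwise, where |x| is the Hamming weight of x. Let Q ⊆ {0,1}^d be a set of q points, each of Hamming weight within √d of d/2. Then the number of sets S ⊆ {1,…,d} with |S| = t for which there exist x₁ ⪯ x₂ ⪯ ⋯ ⪯ x_{k+1}, all belonging to Q, with f_S(x₁) = 1 and f_S(xᵢ) ≠ f_S(xᵢ₊₁) for all 1 ≤ i ≤ k, is at most q² · C(⌊2√d⌋, k) · C(d−k, t−k), where C(·,·) denotes binomial coefficients. -/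
/-!
Let `x₁ ⪯ ⋯ ⪯ x_{k+1}` be a violating chain for `f_S` inside the middle levels, and let `D` be the
set of coordinates on which `x₁` and `x_{k+1}` differ. Each change of value of `f_S` is a change of
the parity of `|S ∩ supp xᵢ|`, so `S ∩ supp xᵢ` grows strictly at each step; hence `|S ∩ D| ≥ k`
(`le_card_inter_newCoords`). Moreover `|D|` is the difference of two weights of middle levels, so
`|D| ≤ 2√d` (`card_newCoords_le`). Therefore `S` is the union of a `k`-subset `T` of `D` and a
`(t - k)`-subset of the complement of `T`. The bound is a union bound over the at most `q²` choices
of the endpoints, the at most `C(⌊2√d⌋, k)` choices of `T`, and the `C(d - k, t - k)` choices of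
`S \ T`.
-/

open scoped Classical

/-- Hamming weight of a point of the hypercube `{0,1}^d`. -/
def wt {d : ℕ} (x : Fin d → Bool) : ℕ :=
  (Finset.univ.filter (fun i => x i = true)).card

/-- The truncated anti-parity `f_S`: `NOT(⊕_{i∈S} xᵢ)` on the middle levels
`||x| − d/2| ≤ √d`, and `0` elsewhere. -/
noncomputable def truncAntiParity (d : ℕ) (S : Finset (Fin d)) (x : Fin d → Bool) : Bool :=
  if |(wt x : ℝ) - d / 2| ≤ Real.sqrt d then
    ! decide ((S.filter (fun i => x i = true)).card % 2 = 1)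
  else false

/-- The coordinates that are `0` in `a` and `1` in `b`. -/
def newCoords {d : ℕ} (a b : Fin d → Bool) : Finset (Fin d) :=
  Finset.univ.filter (fun i => a i = false ∧ b i = true)

theorem card_filter_add_card_inter_newCoords {d : ℕ} (S : Finset (Fin d)) {a b : Fin d → Bool}
    (hab : a ≤ b) :
    (S.filter (fun i => a i = true)).card + (S ∩ newCoords a b).card
      = (S.filter (fun i => b i = true)).card := by
  rw [← Finset.card_union_of_disjoint]
  · congr 1
    ext i
    have h := hab i
    rw [Bool.le_iff_imp] at h
    cases ha : a i <;> cases hb : b i <;> simp_all [newCoords]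
  · rw [Finset.disjoint_left]
    intro i h1 h2
    simp_all [newCoords]

theorem filter_mono_point {d : ℕ} (S : Finset (Fin d)) {a b : Fin d → Bool} (hab : a ≤ b) :
    S.filter (fun i => a i = true) ⊆ S.filter (fun i => b i = true) := by
  intro i
  simp only [Finset.mem_filter]
  rintro ⟨h1, h2⟩
  have h := hab i
  exact ⟨h1, Bool.le_iff_imp.1 h h2⟩

/-- Two points of the middle levels lie at distance at most `2√d` when they are comparable. -/
theorem card_newCoords_le {d : ℕ} {a b : Fin d → Bool} (hab : a ≤ b)
    (ha : |(wt a : ℝ) - (d : ℝ) / 2| ≤ Real.sqrt d)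
    (hb : |(wt b : ℝ) - (d : ℝ) / 2| ≤ Real.sqrt d) :
    (newCoords a b).card ≤ ⌊2 * Real.sqrt d⌋₊ := by
  apply Nat.le_floor
  have h := card_filter_add_card_inter_newCoords Finset.univ hab
  rw [Finset.univ_inter] at h
  have h' : (wt a : ℝ) + ((newCoords a b).card : ℝ) = wt b := by exact_mod_cast h
  rw [abs_le] at ha hb
  linarith [ha.1, hb.2]

/-- A violating chain of middle points forces `S` to contain at least `k` of the coordinates that
are switched on between its endpoints. -/
theorem le_card_inter_newCoords {d k : ℕ} {S : Finset (Fin d)} {x : Fin (k + 1) → (Fin d → Bool)}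
    (hmid : ∀ i, |(wt (x i) : ℝ) - (d : ℝ) / 2| ≤ Real.sqrt d)
    (hx : IsViolChain (truncAntiParity d S) k x) :
    k ≤ (S ∩ newCoords (x 0) (x (Fin.last k))).card := by
  obtain ⟨hmono, -, hne⟩ := hx
  have hstrict : StrictMono fun i => (S.filter (fun j => x i j = true)).card := by
    rw [Fin.strictMono_iff_lt_succ]
    intro i
    apply Finset.card_lt_card
    refine (filter_mono_point S (hmono i.castSucc_lt_succ.le)).ssubset_of_ne fun h => hne i ?_
    simp only [truncAntiParity, if_pos (hmid _), h]
  -- A strictly increasing sequence of naturals grows by at least one at each step.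
  have hgrow : ∀ i : Fin (k + 1), (S.filter (fun j => x 0 j = true)).card + (i : ℕ)
      ≤ (S.filter (fun j => x i j = true)).card := by
    intro i
    induction i using Fin.induction with
    | zero => simp
    | succ i ih =>
      have := hstrict i.castSucc_lt_succ
      simp only [Fin.val_castSucc, Fin.val_succ] at ih this ⊢
      omega
  have h1 := hgrow (Fin.last k)
  have h2 := card_filter_add_card_inter_newCoords S (hmono (Fin.zero_le (Fin.last k)))
  simp only [Fin.val_last] at h1
  omega

/-- Counting truncated anti-parities violated by a query set `Q` of `q` points in the
middle levels: at most `q² · C(⌊2√d⌋, k) · C(d−k, t−k)` sets `S` of size `t` are such that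
`Q` contains a violating chain for `(f_S, k)`. -/
theorem count_violated_truncated_antiparities (d k t q : ℕ)
    (hk : 1 ≤ k) (hkt : k ≤ t) (htd : t ≤ d)
    (Q : Finset (Fin d → Bool)) (hQcard : Q.card = q)
    (hQmid : ∀ x ∈ Q, |(wt x : ℝ) - (d : ℝ) / 2| ≤ Real.sqrt d) :
    (Finset.univ.filter (fun S : Finset (Fin d) => S.card = t ∧
      ∃ x : Fin (k + 1) → (Fin d → Bool), (∀ i, x i ∈ Q) ∧
        IsViolChain (truncAntiParity d S) k x)).card ≤
      q ^ 2 * Nat.choose ⌊2 * Real.sqrt d⌋₊ k * Nat.choose (d - k) (t - k) := by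
  subst hQcard
  set N := ⌊2 * Real.sqrt d⌋₊ with hN
  let P := (Q ×ˢ Q).filter (fun p => (newCoords p.1 p.2).card ≤ N)
  let F : Finset (Fin d) → Finset (Finset (Fin d)) := fun T =>
    (Finset.powersetCard (t - k) Tᶜ).image (fun U => T ∪ U)
  let G : (Fin d → Bool) × (Fin d → Bool) → Finset (Finset (Fin d)) := fun p =>
    (Finset.powersetCard k (newCoords p.1 p.2)).biUnion F
  have hsub : (Finset.univ.filter (fun S : Finset (Fin d) => S.card = t ∧
      ∃ x : Fin (k + 1) → (Fin d → Bool), (∀ i, x i ∈ Q) ∧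
        IsViolChain (truncAntiParity d S) k x)) ⊆ P.biUnion G := by
    intro S hS
    obtain ⟨-, hSt, x, hxQ, hx⟩ := Finset.mem_filter.1 hS
    obtain ⟨T, hT, hTk⟩ := Finset.exists_subset_card_eq
      (le_card_inter_newCoords (fun i => hQmid _ (hxQ i)) hx)
    have hTS : T ⊆ S := hT.trans Finset.inter_subset_left
    refine Finset.mem_biUnion.2 ⟨(x 0, x (Fin.last k)), ?_, ?_⟩
    · exact Finset.mem_filter.2 ⟨Finset.mk_mem_product (hxQ _) (hxQ _),
        card_newCoords_le (hx.1 (Fin.zero_le _)) (hQmid _ (hxQ _)) (hQmid _ (hxQ _))⟩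
    · refine Finset.mem_biUnion.2 ⟨T, Finset.mem_powersetCard.2
        ⟨hT.trans Finset.inter_subset_right, hTk⟩, ?_⟩
      refine Finset.mem_image.2 ⟨S \ T, Finset.mem_powersetCard.2 ⟨?_, ?_⟩, ?_⟩
      · intro i hi
        exact Finset.mem_compl.2 (Finset.mem_sdiff.1 hi).2
      · rw [Finset.card_sdiff_of_subset hTS, hSt, hTk]
      · exact Finset.union_sdiff_of_subset hTS
  have hF : ∀ T : Finset (Fin d), T.card = k → (F T).card ≤ Nat.choose (d - k) (t - k) := by
    intro T hT
    refine Finset.card_image_le.trans ?_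
    rw [Finset.card_powersetCard, Finset.card_compl, Fintype.card_fin, hT]
  have hG : ∀ p ∈ P, (G p).card ≤ Nat.choose N k * Nat.choose (d - k) (t - k) := by
    intro p hp
    refine (Finset.card_biUnion_le_card_mul _ _ _
      fun T hT => hF T (Finset.mem_powersetCard.1 hT).2).trans ?_
    rw [Finset.card_powersetCard]
    exact Nat.mul_le_mul_right _ (Nat.choose_le_choose k (Finset.mem_filter.1 hp).2)
  have hP : P.card ≤ Q.card ^ 2 := by
    refine (Finset.card_filter_le _ _).trans ?_
    rw [Finset.card_product, sq]
  refine (Finset.card_le_card hsub).trans ((Finset.card_biUnion_le_card_mul _ _ _ hG).trans ?_)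
  rw [mul_assoc]
  exact Nat.mul_le_mul_right _ hP
end

section
/- Trading the range for a dimension (L1 distance to monotone equals Hamming distance of the threshold function): let Ω be a finite partially ordered set and f : Ω → [0,1]. Define T∘f : Ω × [0,1] → {0,1} by T∘f(x,t) = 1 if f(x) ≥ 1−t and 0 otherwise, and equip Ω × [0,1] with the product partial order (using the usual order on [0,1]). Then the infimum, over all monotone g : Ω → [0,1], of (1/|Ω|)·Σ_{x∈Ω} |f(x) − g(x)|, is equal to the infimum, over all monotone measurable G : Ω × [0,1] → {0,1}, of (1/|Ω|)·Σ_{x∈Ω} λ({t ∈ [0,1] : T∘f(x,t) ≠ G(x,t)}), where λ is Lebesgue measure on [0,1]. -/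
open MeasureTheory

/-!
The two sets of values whose infima are compared coincide. A monotone `g` gives the monotone
Boolean function `T∘g`. Conversely, for monotone `G` each slice `{t ∈ [0,1] | G (x, t)}` is an
up-set of `[0,1]`, so up to its left endpoint it is `[1 - g x, 1]` with `g x` its length, and `g` is
monotone because slices grow with `x`. In both directions the slice over `x` has threshold `1 - g x`,
and it differs from `{t | 1 - t ≤ f x}` in an interval with endpoints `1 - f x` and `1 - g x`,
of length `|f x - g x|` (`volume_threshold_ne`).
-/

/-- If `B` is, on `[0,1]`, the indicator of an interval from `1 - a` to `1` (the endpoint `1 - a`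
being in or out), then it differs from the indicator of `1 - t ≤ c` on a set of length `|c - a|`. -/
lemma volume_threshold_ne (B : ℝ → Bool) {a c : ℝ} (ha : a ∈ Set.Icc (0 : ℝ) 1)
    (hc : c ∈ Set.Icc (0 : ℝ) 1)
    (h1 : ∀ t ∈ Set.Icc (0 : ℝ) 1, B t = true → 1 - t ≤ a)
    (h2 : ∀ t ∈ Set.Icc (0 : ℝ) 1, B t = false → a ≤ 1 - t) :
    (volume {t ∈ Set.Icc (0 : ℝ) 1 | (decide (1 - t ≤ c) : Bool) ≠ B t}).toReal = |c - a| := by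
  obtain ⟨ha0, ha1⟩ := ha
  obtain ⟨hc0, hc1⟩ := hc
  have key : volume {t ∈ Set.Icc (0 : ℝ) 1 | (decide (1 - t ≤ c) : Bool) ≠ B t}
      = ENNReal.ofReal |c - a| := by
    apply le_antisymm
    · calc _ ≤ volume (Set.uIcc (1 - c) (1 - a)) := by
            apply measure_mono
            rintro t ⟨ht, hne⟩
            rw [Set.mem_uIcc]
            cases hB : B t
            · have := h2 t ht hB
              simp [hB] at hne
              left; constructor <;> linarith
            · have := h1 t ht hB
              simp [hB] at hne
              right; constructor <;> linarith
        _ = _ := by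
            rw [Set.uIcc, Real.volume_Icc]
            change ENNReal.ofReal (max (1 - c) (1 - a) - min (1 - c) (1 - a)) = _
            rw [max_sub_min_eq_abs]
            congr 2; ring
    · calc ENNReal.ofReal |c - a| = volume (Set.uIoo (1 - c) (1 - a)) := by
            rw [Set.uIoo, Real.volume_Ioo, max_sub_min_eq_abs]
            congr 2; ring
        _ ≤ _ := by
            apply measure_mono
            intro t ht
            rw [Set.uIoo, Set.mem_Ioo, min_lt_iff, lt_max_iff] at ht
            have ht01 : t ∈ Set.Icc (0 : ℝ) 1 := by
              obtain ⟨h | h, h' | h'⟩ := ht <;> constructor <;> linarith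
            refine ⟨ht01, fun he => ?_⟩
            cases hB : B t
            · have := h2 t ht01 hB
              simp [hB] at he
              obtain ⟨h | h, h' | h'⟩ := ht <;> linarith
            · have := h1 t ht01 hB
              simp [hB] at he
              obtain ⟨h | h, h' | h'⟩ := ht <;> linarith
  rw [key, ENNReal.toReal_ofReal (abs_nonneg _)]


/-- Trading the range for a dimension: the `L1` distance of `f : Ω → [0,1]` to the monotone
`[0,1]`-valued functions equals the (normalized) distance of its threshold function
`T∘f(x,t) = [f(x) ≥ 1−t]` to the monotone Boolean functions on `Ω × [0,1]`. -/
theorem l1_dist_monotone_eq_dist_threshold {Ω : Type*} [PartialOrder Ω] [Fintype Ω]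
    (f : Ω → ℝ) (hf : ∀ x, f x ∈ Set.Icc (0 : ℝ) 1) :
    sInf {v : ℝ | ∃ g : Ω → ℝ, Monotone g ∧ (∀ x, g x ∈ Set.Icc (0 : ℝ) 1) ∧
        v = (1 / (Fintype.card Ω : ℝ)) * ∑ x, |f x - g x|} =
    sInf {v : ℝ | ∃ G : Ω × ℝ → Bool,
        (∀ p q : Ω × ℝ, p.1 ≤ q.1 → p.2 ≤ q.2 →
          p.2 ∈ Set.Icc (0 : ℝ) 1 → q.2 ∈ Set.Icc (0 : ℝ) 1 → G p ≤ G q) ∧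
        (∀ x : Ω, MeasurableSet {t : ℝ | G (x, t) = true}) ∧
        v = (1 / (Fintype.card Ω : ℝ)) * ∑ x,
          (volume {t ∈ Set.Icc (0 : ℝ) 1 |
            (decide (1 - t ≤ f x) : Bool) ≠ G (x, t)}).toReal} := by
  congr 1
  ext v
  constructor
  · rintro ⟨g, hg, hg01, rfl⟩
    refine ⟨fun p => decide (1 - p.2 ≤ g p.1), ?_, ?_, ?_⟩
    · intro p q h1 h2 _ _
      have := hg h1
      rw [Bool.le_iff_imp]
      simp only [decide_eq_true_eq]
      intro h
      linarith
    · intro x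
      simp only [decide_eq_true_eq]
      exact measurableSet_le (by fun_prop) (by fun_prop)
    · congr 1
      refine Finset.sum_congr rfl fun x _ => ?_
      refine (volume_threshold_ne (fun t => decide (1 - t ≤ g x)) (hg01 x) (hf x) ?_ ?_).symm
      · intro t _ h
        simpa using h
      · intro t _ h
        exact le_of_lt (not_le.1 (of_decide_eq_false h))
  · rintro ⟨G, hG, -, rfl⟩
    have hfin : ∀ x, volume {t ∈ Set.Icc (0 : ℝ) 1 | G (x, t) = true} ≠ ⊤ := fun x =>
      measure_ne_top_of_subset (Set.sep_subset _ _) (by simp)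
    have hg1 : ∀ x, ∀ t ∈ Set.Icc (0 : ℝ) 1, G (x, t) = true →
        1 - t ≤ volume.real {t ∈ Set.Icc (0 : ℝ) 1 | G (x, t) = true} := by
      intro x t ht h
      have hsub : Set.Icc t 1 ⊆ {t ∈ Set.Icc (0 : ℝ) 1 | G (x, t) = true} := by
        intro s hs
        have hs' : s ∈ Set.Icc (0 : ℝ) 1 := ⟨ht.1.trans hs.1, hs.2⟩
        exact ⟨hs', Bool.le_iff_imp.1 (hG (x, t) (x, s) le_rfl hs.1 ht hs') h⟩
      have := measureReal_mono hsub (hfin x)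
      rwa [Real.volume_real_Icc_of_le ht.2] at this
    have hg2 : ∀ x, ∀ t ∈ Set.Icc (0 : ℝ) 1, G (x, t) = false →
        volume.real {t ∈ Set.Icc (0 : ℝ) 1 | G (x, t) = true} ≤ 1 - t := by
      intro x t ht h
      have hsub : {t ∈ Set.Icc (0 : ℝ) 1 | G (x, t) = true} ⊆ Set.Icc t 1 := by
        rintro s ⟨hs, hGs⟩
        refine ⟨?_, hs.2⟩
        by_contra! hst
        have := Bool.le_iff_imp.1 (hG (x, s) (x, t) le_rfl hst.le hs ht) hGs
        simp [h] at this
      have := measureReal_mono (μ := volume) hsub (by simp)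
      rwa [Real.volume_real_Icc_of_le ht.2] at this
    have hg01 : ∀ x, volume.real {t ∈ Set.Icc (0 : ℝ) 1 | G (x, t) = true} ∈
        Set.Icc (0 : ℝ) 1 := by
      intro x
      refine ⟨measureReal_nonneg, ?_⟩
      have := measureReal_mono (μ := volume)
        (Set.sep_subset (Set.Icc (0 : ℝ) 1) fun t => G (x, t) = true) (by simp)
      simpa using this
    refine ⟨fun x => volume.real {t ∈ Set.Icc (0 : ℝ) 1 | G (x, t) = true}, ?_, hg01, ?_⟩
    · intro x y hxy
      refine measureReal_mono ?_ (hfin y)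
      rintro t ⟨ht, h⟩
      exact ⟨ht, Bool.le_iff_imp.1 (hG (x, t) (y, t) hxy le_rfl ht ht) h⟩
    · congr 1
      refine Finset.sum_congr rfl fun x _ => ?_
      exact volume_threshold_ne (fun t => G (x, t)) (hg01 x) (hf x) (hg1 x) (hg2 x)
end

section
/- Rounding changes the L1 distance to monotonicity by at most 1/m: let Ω be a finite partially ordered set, m ≥ 1 an integer, and f : Ω → [0,1]. Define the m-rounding Φ_m∘f : Ω → {i/m : 0 ≤ i ≤ m} by Φ_m∘f(x) = ⌈m·f(x)⌉/m. Then the absolute difference between (i) the infimum over monotone g : Ω → [0,1] of (1/|Ω|)·Σ_{x∈Ω} |f(x) − g(x)| and (ii) the minimum over monotone g : Ω → {i/m : 0 ≤ i ≤ m} of (1/|Ω|)·Σ_{x∈Ω} |Φ_m∘f(x) − g(x)| is at most 1/m. -/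
/-!
Each infimum is bounded by the other plus `1/m` by transporting competitors. If `g` is monotone with
values in `[0,1]`, then so is its rounding `x ↦ ⌈m·g(x)⌉/m`, which takes values in the grid; and since
the ceiling changes a difference by at most `1`, we have `|Φ_m∘f - Φ_m∘g| ≤ |f - g| + 1/m` pointwise
(`abs_ceil_div_sub_ceil_div_le`). In the other direction, a monotone grid-valued `g` is itself a
competitor for the first infimum, and `|f - g| ≤ |Φ_m∘f - g| + 1/m` by the triangle inequality.
Pointwise bounds average over `Ω` (`average_le_average_add`).
-/

lemma average_le_average_add {Ω : Type*} [Fintype Ω] {u v : Ω → ℝ} {c : ℝ} (hc : 0 ≤ c)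
    (h : ∀ x, u x ≤ v x + c) :
    (1 / (Fintype.card Ω : ℝ)) * ∑ x, u x ≤ (1 / (Fintype.card Ω : ℝ)) * ∑ x, v x + c := by
  -- For empty `Ω` both averages are `0`, and the claim reduces to `0 ≤ c`.
  rcases isEmpty_or_nonempty Ω with hΩ | hΩ
  · simpa using hc
  · have hn : (0 : ℝ) < Fintype.card Ω := by exact_mod_cast Fintype.card_pos
    calc (1 / (Fintype.card Ω : ℝ)) * ∑ x, u x
        ≤ (1 / (Fintype.card Ω : ℝ)) * ∑ x, (v x + c) := by gcongr with x; exact h x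
      _ = (1 / (Fintype.card Ω : ℝ)) * ∑ x, v x + c := by
        rw [Finset.sum_add_distrib, Finset.sum_const, Finset.card_univ, nsmul_eq_mul]
        field_simp

lemma abs_sub_ceil_div_le {m : ℕ} (hm : 1 ≤ m) (a : ℝ) :
    |a - (⌈(m : ℝ) * a⌉ : ℝ) / m| ≤ 1 / m := by
  have hm0 : (0 : ℝ) < m := by exact_mod_cast hm
  have e : a - (⌈(m : ℝ) * a⌉ : ℝ) / m = (m * a - ⌈(m : ℝ) * a⌉) / m := by field_simp
  rw [e, abs_div, abs_of_pos hm0]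
  gcongr
  rw [abs_le]
  constructor <;> linarith [Int.le_ceil ((m : ℝ) * a), Int.ceil_lt_add_one ((m : ℝ) * a)]

/-- The two rounding errors lie in the same interval `[0, 1/m]`, so together they cost only `1/m`
rather than `2/m`. -/
lemma abs_ceil_div_sub_ceil_div_le {m : ℕ} (hm : 1 ≤ m) (a b : ℝ) :
    |(⌈(m : ℝ) * a⌉ : ℝ) / m - (⌈(m : ℝ) * b⌉ : ℝ) / m| ≤ |a - b| + 1 / m := by
  have hm0 : (0 : ℝ) < m := by exact_mod_cast hm
  have e : |a - b| + 1 / m = (|m * a - m * b| + 1) / m := by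
    rw [← mul_sub, abs_mul, abs_of_pos hm0]
    field_simp
  rw [e, ← sub_div, abs_div, abs_of_pos hm0]
  gcongr
  rw [abs_le]
  constructor <;>
    linarith [Int.le_ceil ((m : ℝ) * a), Int.ceil_lt_add_one ((m : ℝ) * a),
      Int.le_ceil ((m : ℝ) * b), Int.ceil_lt_add_one ((m : ℝ) * b),
      le_abs_self ((m : ℝ) * a - m * b), neg_abs_le ((m : ℝ) * a - m * b)]

lemma exists_ceil_div_eq {m : ℕ} {a : ℝ} (ha : a ∈ Set.Icc (0 : ℝ) 1) :
    ∃ i : ℕ, i ≤ m ∧ (⌈(m : ℝ) * a⌉ : ℝ) / m = (i : ℝ) / m := by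
  have h0 : 0 ≤ (m : ℝ) * a := mul_nonneg m.cast_nonneg ha.1
  refine ⟨⌈(m : ℝ) * a⌉₊, ?_, by rw [natCast_ceil_eq_intCast_ceil h0]⟩
  exact Nat.ceil_le.2 (mul_le_of_le_one_right m.cast_nonneg ha.2)

/-- Rounding changes the `L1` distance to monotonicity by at most `1/m`: the `L1` distance
of `f : Ω → [0,1]` to the monotone `[0,1]`-valued functions, and the `L1` distance of the
`m`-rounding `Φ_m∘f(x) = ⌈m·f(x)⌉/m` to the monotone `{0, 1/m, …, 1}`-valued functions,
differ by at most `1/m`. -/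
theorem rounding_changes_l1_dist_by_at_most_inv_m {Ω : Type*} [PartialOrder Ω] [Fintype Ω]
    (m : ℕ) (hm : 1 ≤ m) (f : Ω → ℝ) (hf : ∀ x, f x ∈ Set.Icc (0 : ℝ) 1) :
    |sInf {v : ℝ | ∃ g : Ω → ℝ, Monotone g ∧ (∀ x, g x ∈ Set.Icc (0 : ℝ) 1) ∧
        v = (1 / (Fintype.card Ω : ℝ)) * ∑ x, |f x - g x|} -
     sInf {v : ℝ | ∃ g : Ω → ℝ, Monotone g ∧ (∀ x, ∃ i : ℕ, i ≤ m ∧ g x = (i : ℝ) / m) ∧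
        v = (1 / (Fintype.card Ω : ℝ)) *
          ∑ x, |(⌈(m : ℝ) * f x⌉ : ℝ) / m - g x|}| ≤ 1 / m := by
  have hc : (0 : ℝ) ≤ 1 / m := by positivity
  have hm0 : (0 : ℝ) < m := by exact_mod_cast hm
  rw [abs_sub_le_iff, sub_le_iff_le_add', sub_le_iff_le_add']
  constructor
  · rw [← sub_le_iff_le_add]
    refine le_csInf ⟨_, fun _ => 0, monotone_const, fun _ => ⟨0, by simp⟩, rfl⟩ ?_
    rintro _ ⟨g, hg, hgm, rfl⟩
    rw [sub_le_iff_le_add]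
    refine le_trans (csInf_le ?_ ⟨g, hg, ?_, rfl⟩) (average_le_average_add hc fun x => ?_)
    · refine ⟨0, ?_⟩
      rintro _ ⟨g, -, -, rfl⟩
      positivity
    · intro x
      obtain ⟨i, hi, hx⟩ := hgm x
      have hi' : (i : ℝ) ≤ m := by exact_mod_cast hi
      rw [hx]
      exact ⟨by positivity, (div_le_one hm0).2 hi'⟩
    · linarith [abs_sub_le (f x) ((⌈(m : ℝ) * f x⌉ : ℝ) / m) (g x), abs_sub_ceil_div_le hm (f x)]
  · rw [← sub_le_iff_le_add]
    refine le_csInf ⟨_, fun _ => 0, monotone_const, fun _ => by simp, rfl⟩ ?_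
    rintro _ ⟨g, hg, hg01, rfl⟩
    rw [sub_le_iff_le_add]
    refine le_trans (csInf_le ?_ ⟨fun x => (⌈(m : ℝ) * g x⌉ : ℝ) / m, fun x y hxy => ?_,
      fun x => exists_ceil_div_eq (hg01 x), rfl⟩)
      (average_le_average_add hc fun x => abs_ceil_div_sub_ceil_div_le hm (f x) (g x))
    · refine ⟨0, ?_⟩
      rintro _ ⟨g, -, -, rfl⟩
      positivity
    · have hxy' := hg hxy
      dsimp only
      gcongr
end

section
/- Discrete range–dimension tradeoff: let Ω be a finite partially ordered set, m ≥ 1 an integer, and g : Ω → {i/m : 0 ≤ i ≤ m}. Then m times the minimum, over monotone g' : Ω → {i/m : 0 ≤ i ≤ m}, of Σ_{x∈Ω} |g(x) − g'(x)|, is equal to the minimum, over monotone G : Ω × {0,1,…,m−1} → {0,1} (product order, with the usual order on {0,…,m−1}), of the number of pairs (x,j) ∈ Ω × {0,…,m−1} such that G(x,j) differs from the indicator of the event g(x) ≥ (m−j)/m. -/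
open scoped Classical

/-!
Write `g = a / m` with `a : Ω → {0, …, m}`. A monotone Boolean function `G` on `Ω × Fin m` is,
on each fibre `{x} × Fin m`, the indicator of an upper set of the chain `Fin m`; such an upper set
is determined by its size `b x`, and consists of the `j` with `m - j ≤ b x`
(`monotone_eq_threshold`). Thus the monotone `G` are exactly the threshold functions of the
monotone `b / m`. On the fibre over `x` the threshold functions of `a` and `b` differ in exactly
`|a x - b x|` places (`card_threshold_ne`), so summing over `x` shows that the Hamming distance of
the threshold functions is `m` times the `L1` distance (`hamming_eq_l1`). The two sets of
distances therefore correspond under scaling by `m`, and so do their minima.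
-/

lemma card_threshold_ne_of_le {m a b : ℕ} (hab : a ≤ b) (hb : b ≤ m) :
    (Finset.univ.filter (fun j : Fin m => ¬ (m - (j : ℕ) ≤ b ↔ m - (j : ℕ) ≤ a))).card
      = b - a := by
  rw [← Finset.card_map Fin.valEmbedding]
  -- the places of disagreement form the interval `[m - b, m - a)`
  have h : (Finset.univ.filter
      (fun j : Fin m => ¬ (m - (j : ℕ) ≤ b ↔ m - (j : ℕ) ≤ a))).map Fin.valEmbedding
      = Finset.Ico (m - b) (m - a) := by
    ext k
    simp only [Finset.mem_map, Finset.mem_filter, Finset.mem_univ, true_and, Finset.mem_Ico,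
      Fin.valEmbedding_apply]
    constructor
    · rintro ⟨j, hj, rfl⟩
      have := j.2
      omega
    · intro hk
      exact ⟨⟨k, by omega⟩, by dsimp only; omega, rfl⟩
  rw [h, Nat.card_Ico]
  omega

lemma card_threshold_ne {m a b : ℕ} (ha : a ≤ m) (hb : b ≤ m) :
    ((Finset.univ.filter
      (fun j : Fin m => ¬ (m - (j : ℕ) ≤ b ↔ m - (j : ℕ) ≤ a))).card : ℝ)
      = |(a : ℝ) - b| := by
  rcases le_total a b with h | h
  · rw [card_threshold_ne_of_le h hb, Nat.cast_sub h, abs_sub_comm,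
      abs_of_nonneg (sub_nonneg.2 (Nat.cast_le.2 h))]
  · simp_rw [iff_comm (a := _ ≤ b)]
    rw [card_threshold_ne_of_le h ha, Nat.cast_sub h,
      abs_of_nonneg (sub_nonneg.2 (Nat.cast_le.2 h))]

/-- A monotone Boolean function on the chain `Fin m` is the threshold function of the number of
points where it is true. -/
lemma monotone_eq_threshold {m : ℕ} {p : Fin m → Bool} (hp : Monotone p) (j : Fin m) :
    p j = true ↔ m - (j : ℕ) ≤ (Finset.univ.filter (fun i => p i = true)).card := by
  constructor
  · intro h
    rw [← Fin.card_Ici]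
    refine Finset.card_le_card fun i hi => ?_
    simpa using hp (Finset.mem_Ici.1 hi) h
  · intro h
    by_contra hj
    have : (Finset.univ.filter (fun i => p i = true)) ⊆ Finset.Ioi j := by
      intro i hi
      rw [Finset.mem_Ioi]
      by_contra hij
      exact hj (hp (not_lt.1 hij) (Finset.mem_filter.1 hi).2)
    have := Finset.card_le_card this
    rw [Fin.card_Ioi] at this
    have := j.2
    omega

/-- The Hamming distance of the threshold functions of `b / m` and `g = a / m` is `m` times the
`L1` distance of `g` and `b / m`. -/
lemma hamming_eq_l1 {Ω : Type*} [Fintype Ω] {m : ℕ} (hm : 1 ≤ m) {g : Ω → ℝ} {a b : Ω → ℕ}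
    (ha : ∀ x, a x ≤ m) (hga : ∀ x, g x = (a x : ℝ) / m) (hb : ∀ x, b x ≤ m)
    {G : Ω × Fin m → Bool} (hG : ∀ x j, G (x, j) = true ↔ m - (j : ℕ) ≤ b x) :
    ((Finset.univ.filter (fun p : Ω × Fin m =>
      G p ≠ decide ((((m - (p.2 : ℕ) : ℕ)) : ℝ) / m ≤ g p.1))).card : ℝ)
      = m * ∑ x, |g x - (b x : ℝ) / m| := by
  have hm0 : (0 : ℝ) < m := by exact_mod_cast hm
  rw [Finset.card_filter, Fintype.sum_prod_type, Nat.cast_sum, Finset.mul_sum]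
  refine Finset.sum_congr rfl fun x _ => ?_
  rw [← Finset.card_filter]
  have h1 : (m : ℝ) * |g x - (b x : ℝ) / m| = |(a x : ℝ) - b x| := by
    rw [hga, ← sub_div, abs_div, abs_of_pos hm0]
    field_simp
  rw [h1, ← card_threshold_ne (ha x) (hb x)]
  congr 2
  ext j
  rw [Finset.mem_filter, Finset.mem_filter, ne_eq, Bool.eq_iff_iff, hG, decide_eq_true_iff, hga,
    div_le_div_iff_of_pos_right hm0, Nat.cast_le]

/-- Discrete range–dimension tradeoff: for `g : Ω → {0, 1/m, …, 1}`, `m` times the minimum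
`L1` distance of `g` to the monotone `{0, 1/m, …, 1}`-valued functions equals the minimum
Hamming distance of the threshold function `(x,j) ↦ [g(x) ≥ (m−j)/m]` on `Ω × {0,…,m−1}`
to the monotone Boolean functions. -/
theorem discrete_range_dimension_tradeoff {Ω : Type*} [PartialOrder Ω] [Fintype Ω]
    (m : ℕ) (hm : 1 ≤ m) (g : Ω → ℝ) (hg : ∀ x, ∃ i : ℕ, i ≤ m ∧ g x = (i : ℝ) / m) :
    (m : ℝ) * sInf {v : ℝ | ∃ g' : Ω → ℝ, Monotone g' ∧
        (∀ x, ∃ i : ℕ, i ≤ m ∧ g' x = (i : ℝ) / m) ∧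
        v = ∑ x, |g x - g' x|} =
    ((sInf {c : ℕ | ∃ G : Ω × Fin m → Bool, Monotone G ∧
        c = (Finset.univ.filter (fun p : Ω × Fin m =>
          G p ≠ decide ((((m - (p.2 : ℕ) : ℕ)) : ℝ) / m ≤ g p.1))).card} : ℕ) : ℝ) := by
  have hm0 : (0 : ℝ) < m := by exact_mod_cast hm
  choose a ha hga using hg
  set C := {c : ℕ | ∃ G : Ω × Fin m → Bool, Monotone G ∧
        c = (Finset.univ.filter (fun p : Ω × Fin m =>
          G p ≠ decide ((((m - (p.2 : ℕ) : ℕ)) : ℝ) / m ≤ g p.1))).card} with hC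
  have hne : C.Nonempty := ⟨_, fun _ => false, monotone_const, rfl⟩
  suffices h : IsLeast {v : ℝ | ∃ g' : Ω → ℝ, Monotone g' ∧
        (∀ x, ∃ i : ℕ, i ≤ m ∧ g' x = (i : ℝ) / m) ∧
        v = ∑ x, |g x - g' x|} (((sInf C : ℕ) : ℝ) / m) by
    rw [h.csInf_eq]
    field_simp
  constructor
  · obtain ⟨G, hG, hc⟩ := Nat.sInf_mem hne
    have hb : ∀ x, (Finset.univ.filter (fun j : Fin m => G (x, j) = true)).card ≤ m :=
      fun x => (Finset.card_le_univ _).trans_eq (Fintype.card_fin m)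
    refine ⟨fun x => ((Finset.univ.filter (fun j : Fin m => G (x, j) = true)).card : ℝ) / m,
      fun x y hxy => ?_, fun x => ⟨_, hb x, rfl⟩, ?_⟩
    · refine div_le_div_of_nonneg_right (Nat.cast_le.2 (Finset.card_le_card fun j hj => ?_)) hm0.le
      have h1 : G (x, j) ≤ G (y, j) := hG ⟨hxy, le_rfl⟩
      simpa using h1 (Finset.mem_filter.1 hj).2
    · rw [hc, hamming_eq_l1 hm ha hga hb fun x j =>
        monotone_eq_threshold (p := fun i => G (x, i)) (fun i k hik => hG ⟨le_rfl, hik⟩) j]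
      field_simp
  · rintro v ⟨g', hg', hv, rfl⟩
    choose b hb hgb using hv
    have hbm : Monotone b := fun x y hxy => by
      have := hg' hxy
      rwa [hgb, hgb, div_le_div_iff_of_pos_right hm0, Nat.cast_le] at this
    have hmono : Monotone fun p : Ω × Fin m => decide (m - (p.2 : ℕ) ≤ b p.1) := by
      rintro ⟨x, j⟩ ⟨y, k⟩ ⟨hxy, hjk⟩ h
      have h1 : b x ≤ b y := hbm hxy
      have h2 : (j : ℕ) ≤ k := hjk
      rw [decide_eq_true_iff] at h ⊢
      dsimp only at h ⊢
      omega
    have hle := Nat.sInf_le (s := C) ⟨_, hmono, rfl⟩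
    rw [div_le_iff₀' hm0]
    simp_rw [hgb]
    rw [← hamming_eq_l1 hm ha hga hb
      (G := fun p : Ω × Fin m => decide (m - (p.2 : ℕ) ≤ b p.1)) fun x j => decide_eq_true_iff]
    exact_mod_cast hle
end

section
/- Matchings between consecutive weight bands of the hypercube: let d ≥ 1 and let a, b, c be integers with 0 ≤ a ≤ b < c ≤ d. Set B = {x ∈ {0,1}^d : a ≤ |x| ≤ b} and B' = {x ∈ {0,1}^d : b < |x| ≤ c}, where |x| is the Hamming weight. Then in the bipartite graph on B ∪ B' whose edges are the pairs (x,y) with x ∈ B, y ∈ B', and x ⪯ y in the coordinatewise order, there exists a matching of size min(|B|, |B'|). -/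
/-- An integral matching from a fractional one: if the weights `W` between `A` and `B` have all
row sums `|B|` and all column sums `|A|`, and `|A| ≤ |B|`, then the support of `W` contains a
matching that saturates `A`. -/
lemma exists_injective_of_weight {α β : Type*} [DecidableEq β]
    (A : Finset α) (B : Finset β) (W : α → β → ℚ) (hW : ∀ x y, 0 ≤ W x y)
    (hrow : ∀ x ∈ A, ∑ y ∈ B, W x y = B.card)
    (hcol : ∀ y ∈ B, ∑ x ∈ A, W x y = A.card) (hAB : A.card ≤ B.card) :
    ∃ f : A → β, Function.Injective f ∧ ∀ x, f x ∈ B ∧ W x (f x) ≠ 0 := by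
  classical
  obtain ⟨f, hf, hfm⟩ := (Finset.all_card_le_biUnion_card_iff_exists_injective
    (fun x : A => B.filter (fun y => W x y ≠ 0))).mp (by
      intro S
      rcases S.eq_empty_or_nonempty with rfl | ⟨x₀, -⟩
      · simp
      have hApos : 0 < A.card := Finset.card_pos.mpr ⟨x₀, x₀.2⟩
      set N := S.biUnion (fun x : A => B.filter (fun y => W x y ≠ 0)) with hN
      have hNB : N ⊆ B := by
        intro y hy
        simp only [hN, Finset.mem_biUnion, Finset.mem_filter] at hy
        obtain ⟨_, _, h, _⟩ := hy
        exact h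
      have key : (S.card : ℚ) * B.card ≤ N.card * A.card := by
        calc (S.card : ℚ) * B.card = ∑ x ∈ S, ∑ y ∈ B, W x y := by
              rw [Finset.sum_congr rfl (fun (x : A) _ => hrow x x.2)]; simp
          _ = ∑ x ∈ S, ∑ y ∈ N, W x y := by
              refine Finset.sum_congr rfl fun x hx => (Finset.sum_subset hNB ?_).symm
              intro y hy hyN
              by_contra h
              exact hyN (Finset.mem_biUnion.mpr ⟨x, hx, Finset.mem_filter.mpr ⟨hy, h⟩⟩)
          _ = ∑ y ∈ N, ∑ x ∈ S, W x y := Finset.sum_comm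
          _ ≤ ∑ y ∈ N, ∑ x ∈ A, W x y := by
              refine Finset.sum_le_sum fun y _ => ?_
              rw [← Finset.sum_coe_sort A]
              exact Finset.sum_le_sum_of_subset_of_nonneg (Finset.subset_univ _)
                fun x _ _ => hW x y
          _ = N.card * A.card := by
              rw [Finset.sum_congr rfl (fun y hy => hcol y (hNB hy))]; simp
      have key' : S.card * B.card ≤ N.card * A.card := by exact_mod_cast key
      exact Nat.le_of_mul_le_mul_right (key'.trans (Nat.mul_le_mul_left _ hAB))
        (hApos.trans_le hAB))
  exact ⟨f, hf, fun x => Finset.mem_filter.mp (hfm x)⟩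

lemma wt_not {d : ℕ} (x : Fin d → Bool) : wt (fun k => !x k) = d - wt x := by
  have h := Finset.card_filter_add_card_filter_not (s := (Finset.univ : Finset (Fin d)))
    (fun k => x k = true)
  simp only [Finset.card_univ, Fintype.card_fin, Bool.not_eq_true] at h
  simp only [wt, Bool.not_eq_true']
  omega

lemma wt_le {d : ℕ} (x : Fin d → Bool) : wt x ≤ d := by
  simpa [wt] using Finset.card_le_univ (Finset.univ.filter (fun k => x k = true))

instance {d : ℕ} (x y : Fin d → Bool) : Decidable (x ≤ y) :=
  decidable_of_iff (∀ k, x k ≤ y k) Iff.rfl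

lemma card_below {d : ℕ} (y : Fin d → Bool) (i : ℕ) :
    (Finset.univ.filter (fun x : Fin d → Bool => wt x = i ∧ x ≤ y)).card = (wt y).choose i := by
  rw [wt, ← Finset.card_powersetCard]
  refine Finset.card_nbij' (fun x => Finset.univ.filter (fun k => x k = true))
    (fun s k => decide (k ∈ s)) ?_ ?_ ?_ ?_
  · intro x hx
    simp only [Finset.coe_filter, Finset.mem_univ, true_and, Set.mem_ofPred_eq] at hx
    simp only [Finset.mem_coe, Finset.mem_powersetCard]
    refine ⟨fun k hk => ?_, hx.1⟩
    simp only [Finset.mem_filter, Finset.mem_univ, true_and] at hk ⊢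
    exact hx.2 k hk
  · intro s hs
    simp only [Finset.mem_coe, Finset.mem_powersetCard] at hs
    simp only [Finset.coe_filter, Finset.mem_univ, true_and, Set.mem_ofPred_eq]
    refine ⟨by simpa [wt] using hs.2, fun k hk => ?_⟩
    have := hs.1 (of_decide_eq_true hk)
    simpa using this
  · intro x _
    funext k
    simp
  · intro s _
    ext k
    simp

lemma card_level (d i : ℕ) :
    (Finset.univ.filter (fun x : Fin d → Bool => wt x = i)).card = d.choose i := by
  have h := card_below (fun _ : Fin d => true) i
  have h1 : ∀ x : Fin d → Bool, x ≤ fun _ => true := fun x k => Bool.le_true _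
  have e : Finset.univ.filter (fun x : Fin d → Bool => wt x = i)
      = Finset.univ.filter (fun x : Fin d → Bool => wt x = i ∧ x ≤ fun _ => true) := by
    ext x
    simp only [Finset.mem_filter, h1, and_true]
  rw [e, h]
  simp [wt]

/-- Negation reverses the order, so this is `card_below` for the negated points. -/
lemma card_above {d : ℕ} (x : Fin d → Bool) (j : ℕ) (hj : j ≤ d) :
    (Finset.univ.filter (fun y : Fin d → Bool => wt y = j ∧ x ≤ y)).card
      = (d - wt x).choose (d - j) := by
  rw [← wt_not, ← card_below]
  have anti : ∀ u v : Fin d → Bool, u ≤ v → (fun k => !v k) ≤ fun k => !u k := by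
    have hBool : ∀ p q : Bool, p ≤ q → (!q) ≤ !p := by decide
    exact fun u v h k => hBool _ _ (h k)
  refine Finset.card_nbij' (fun y k => !y k) (fun y k => !y k) ?_ ?_ ?_ ?_
  · intro y hy
    simp only [Finset.coe_filter, Finset.mem_univ, true_and, Set.mem_ofPred_eq] at hy ⊢
    exact ⟨by rw [wt_not, hy.1], anti _ _ hy.2⟩
  · intro y hy
    simp only [Finset.coe_filter, Finset.mem_univ, true_and, Set.mem_ofPred_eq] at hy ⊢
    refine ⟨by rw [wt_not, hy.1]; omega, ?_⟩
    simpa using anti _ _ hy.2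
  · intro y _
    simp
  · intro y _
    simp

/-- The weight of the pair `(x, y)`: `C(d,|x|) / C(|y|,|x|)` if `x ≤ y`, and `0` otherwise. -/
def edgeWeight {d : ℕ} (x y : Fin d → Bool) : ℚ :=
  if x ≤ y then (d.choose (wt x) : ℚ) / ((wt y).choose (wt x)) else 0

lemma edgeWeight_nonneg {d : ℕ} (x y : Fin d → Bool) : 0 ≤ edgeWeight x y := by
  unfold edgeWeight
  split_ifs <;> positivity

lemma le_of_edgeWeight_ne_zero {d : ℕ} {x y : Fin d → Bool} (h : edgeWeight x y ≠ 0) :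
    x ≤ y := by
  by_contra hxy
  exact h (if_neg hxy)

lemma sum_weight_below_level {d : ℕ} (y : Fin d → Bool) (i : ℕ) (hi : i ≤ wt y) :
    ∑ x ∈ Finset.univ.filter (fun x : Fin d → Bool => wt x = i), edgeWeight x y
      = d.choose i := by
  have h : ∀ x ∈ Finset.univ.filter (fun x : Fin d → Bool => wt x = i),
      edgeWeight x y = if x ≤ y then (d.choose i : ℚ) / ((wt y).choose i) else 0 := by
    intro x hx
    rw [edgeWeight, (Finset.mem_filter.mp hx).2]
  rw [Finset.sum_congr rfl h, ← Finset.sum_filter, Finset.filter_filter, Finset.sum_const,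
    card_below, nsmul_eq_mul]
  have : ((wt y).choose i : ℚ) ≠ 0 := by exact_mod_cast (Nat.choose_pos hi).ne'
  field_simp

lemma sum_weight_above_level {d : ℕ} (x : Fin d → Bool) (j : ℕ) (hj : wt x ≤ j) (hjd : j ≤ d) :
    ∑ y ∈ Finset.univ.filter (fun y : Fin d → Bool => wt y = j), edgeWeight x y
      = d.choose j := by
  have h : ∀ y ∈ Finset.univ.filter (fun y : Fin d → Bool => wt y = j),
      edgeWeight x y = if x ≤ y then (d.choose (wt x) : ℚ) / (j.choose (wt x)) else 0 := by
    intro y hy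
    rw [edgeWeight, (Finset.mem_filter.mp hy).2]
  rw [Finset.sum_congr rfl h, ← Finset.sum_filter, Finset.filter_filter, Finset.sum_const,
    card_above x j hjd, nsmul_eq_mul]
  have h0 : (j.choose (wt x) : ℚ) ≠ 0 := by exact_mod_cast (Nat.choose_pos hj).ne'
  -- Both sides count the flags `x' ⊆ y'` of sizes `|x|` and `j` in a `d`-element set.
  have h1 : (d - wt x).choose (d - j) * d.choose (wt x) = d.choose j * j.choose (wt x) := by
    rw [Nat.choose_mul hj, mul_comm, Nat.choose_symm_of_eq_add
      (show d - wt x = (d - j) + (j - wt x) by omega)]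
  have h2 : ((d - wt x).choose (d - j) : ℚ) * d.choose (wt x) = d.choose j * j.choose (wt x) := by
    exact_mod_cast h1
  rw [← mul_div_assoc, h2]
  field_simp

/-- A function whose sum over each level meeting a union of levels is the size of that level
sums over the whole union to its cardinality. -/
lemma sum_band {d : ℕ} (P : ℕ → Prop) [DecidablePred P] (g : (Fin d → Bool) → ℚ)
    (hg : ∀ i, P i → i ≤ d →
      ∑ x ∈ Finset.univ.filter (fun x : Fin d → Bool => wt x = i), g x = d.choose i) :
    ∑ x ∈ Finset.univ.filter (fun x : Fin d → Bool => P (wt x)), g x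
      = (Finset.univ.filter (fun x : Fin d → Bool => P (wt x))).card := by
  have hm : ∀ x ∈ Finset.univ.filter (fun x : Fin d → Bool => P (wt x)),
      wt x ∈ (Finset.range (d + 1)).filter P := by
    intro x hx
    have := wt_le x
    simp only [Finset.mem_filter, Finset.mem_range, Finset.mem_univ, true_and] at hx ⊢
    exact ⟨by omega, hx⟩
  rw [← Finset.sum_fiberwise_of_maps_to hm, Finset.card_eq_sum_card_fiberwise hm, Nat.cast_sum]
  refine Finset.sum_congr rfl fun i hi => ?_
  simp only [Finset.mem_filter, Finset.mem_range] at hi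
  have e : (Finset.univ.filter (fun x : Fin d → Bool => P (wt x))).filter (fun x => wt x = i)
      = Finset.univ.filter (fun x : Fin d → Bool => wt x = i) := by
    ext x
    simp only [Finset.mem_filter, Finset.mem_univ, true_and, and_iff_right_iff_imp]
    rintro rfl
    exact hi.2
  rw [e, card_level, hg i hi.2 (by omega)]

/-- Matchings between consecutive weight bands of the hypercube: for weight bands
`B = {a ≤ |x| ≤ b}` and `B' = {b < |x| ≤ c}`, the comparability bipartite graph between
`B` and `B'` has a matching of size `min(|B|, |B'|)`. -/
theorem matching_between_weight_bands (d : ℕ) (hd : 1 ≤ d)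
    (a b c : ℕ) (hab : a ≤ b) (hbc : b < c) (hcd : c ≤ d) :
    ∃ M : Finset ((Fin d → Bool) × (Fin d → Bool)),
      (∀ p ∈ M, (a ≤ wt p.1 ∧ wt p.1 ≤ b) ∧ (b < wt p.2 ∧ wt p.2 ≤ c) ∧ p.1 ≤ p.2) ∧
      (∀ p ∈ M, ∀ q ∈ M, p ≠ q → p.1 ≠ q.1 ∧ p.2 ≠ q.2) ∧
      M.card =
        min (Finset.univ.filter (fun x : Fin d → Bool => a ≤ wt x ∧ wt x ≤ b)).card
            (Finset.univ.filter (fun x : Fin d → Bool => b < wt x ∧ wt x ≤ c)).card := by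
  classical
  set A := Finset.univ.filter (fun x : Fin d → Bool => a ≤ wt x ∧ wt x ≤ b) with hA
  set B := Finset.univ.filter (fun x : Fin d → Bool => b < wt x ∧ wt x ≤ c) with hB
  have memA : ∀ x, x ∈ A ↔ a ≤ wt x ∧ wt x ≤ b := by simp [hA]
  have memB : ∀ x, x ∈ B ↔ b < wt x ∧ wt x ≤ c := by simp [hB]
  have hrow : ∀ x ∈ A, ∑ y ∈ B, edgeWeight x y = B.card := by
    intro x hx
    have := (memA x).mp hx
    exact sum_band (fun j => b < j ∧ j ≤ c) _ fun j hj hjd =>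
      sum_weight_above_level x j (by omega) hjd
  have hcol : ∀ y ∈ B, ∑ x ∈ A, edgeWeight x y = A.card := by
    intro y hy
    have := (memB y).mp hy
    exact sum_band (fun i => a ≤ i ∧ i ≤ b) _ fun i hi _ =>
      sum_weight_below_level y i (by omega)
  rcases le_total A.card B.card with h | h
  · obtain ⟨f, hf, hfB⟩ := exists_injective_of_weight A B edgeWeight edgeWeight_nonneg hrow hcol h
    refine ⟨Finset.univ.image (fun x : A => ((x : Fin d → Bool), f x)), ?_, ?_, ?_⟩
    · simp only [Finset.mem_image, Finset.mem_univ, true_and]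
      rintro _ ⟨x, rfl⟩
      exact ⟨(memA _).mp x.2, (memB _).mp (hfB x).1, le_of_edgeWeight_ne_zero (hfB x).2⟩
    · simp only [Finset.mem_image, Finset.mem_univ, true_and]
      rintro _ ⟨x, rfl⟩ _ ⟨y, rfl⟩ hne
      have hxy : x ≠ y := fun e => hne (by rw [e])
      exact ⟨fun e => hxy (Subtype.ext e), fun e => hxy (hf e)⟩
    · rw [Finset.card_image_of_injective _ fun x y e => Subtype.ext (Prod.ext_iff.mp e).1]
      simp [min_eq_left h]
  · obtain ⟨f, hf, hfA⟩ := exists_injective_of_weight B A (fun y x => edgeWeight x y)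
      (fun y x => edgeWeight_nonneg x y) hcol hrow h
    refine ⟨Finset.univ.image (fun y : B => (f y, (y : Fin d → Bool))), ?_, ?_, ?_⟩
    · simp only [Finset.mem_image, Finset.mem_univ, true_and]
      rintro _ ⟨y, rfl⟩
      exact ⟨(memA _).mp (hfA y).1, (memB _).mp y.2, le_of_edgeWeight_ne_zero (hfA y).2⟩
    · simp only [Finset.mem_image, Finset.mem_univ, true_and]
      rintro _ ⟨x, rfl⟩ _ ⟨y, rfl⟩ hne
      have hxy : x ≠ y := fun e => hne (by rw [e])
      exact ⟨fun e => hxy (hf e), fun e => hxy (Subtype.ext e)⟩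
    · rw [Finset.card_image_of_injective _ fun x y e => Subtype.ext (Prod.ext_iff.mp e).2]
      simp [min_eq_right h]
end
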